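/- For binary images P and G on the same h×w grid and any real ε with 0 < ε < 1/4, if C is a regular connected component of FP, then F_ε(P) strongly deformation retracts onto F_ε(P) \ C. (This is the induction step in the proof that, under the zero-loss hypothesis, the inclusion TP ↪ F_ε(P) is a deformation retraction.) -/

import Mathlib

open Set Metric

noncomputable section

/-- The plane modeled as `Fin 2 → ℝ` with the Pi (sup) norm. -/
abbrev Plane : Type := Fin 2 → ℝ

/-- The Euclidean plane (for Euclidean-norm disks and annuli). -/
abbrev EPlane : Type := EuclideanSpace ℝ (Fin 2)

/-- The closed unit pixel `[i-1,i] × [j-1,j]` for a pixel index `(i,j)`. -/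
def pixel (p : ℕ × ℕ) : Set Plane :=
  {x | x 0 ∈ Set.Icc ((p.1 : ℝ) - 1) (p.1 : ℝ) ∧ x 1 ∈ Set.Icc ((p.2 : ℝ) - 1) (p.2 : ℝ)}

/-- A binary image `S` lies on the `h × w` grid `{1,…,h} × {1,…,w}`. -/
def OnGrid (S : Set (ℕ × ℕ)) (h w : ℕ) : Prop :=
  S ⊆ Set.Icc 1 h ×ˢ Set.Icc 1 w

/-- The foreground `F(S)` of a binary image. -/
def fg (S : Set (ℕ × ℕ)) : Set Plane := ⋃ p ∈ S, pixel p

/-- Closed `ε`-thickening `D_ε(X)` with respect to the sup norm. -/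
def thick (ε : ℝ) (X : Set Plane) : Set Plane := {y | ∃ x ∈ X, ‖x - y‖ ≤ ε}

/-- `C` is a connected component of `A` (as a subset of the plane). -/
def IsCompOf (C A : Set Plane) : Prop := ∃ x ∈ A, C = connectedComponentIn A x

/-- Two subsets share a boundary edge if their closures intersect in an infinite set. -/
def SharesEdge (C D : Set Plane) : Prop := (closure C ∩ closure D).Infinite

/-- `X` strongly deformation retracts onto `A`. -/
def SDR (X A : Set Plane) : Prop :=
  ∃ H : C(↥X × unitInterval, ↥X),
    (∀ x, H (x, 0) = x) ∧ (∀ x, ((H (x, 1) : Plane)) ∈ A) ∧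
    (∀ a : ↥X, (a : Plane) ∈ A → ∀ t, H (a, t) = a)

def TPset (P G : Set (ℕ × ℕ)) (ε : ℝ) : Set Plane := thick ε (fg P) ∩ thick (2 * ε) (fg G)
def TNset (P G : Set (ℕ × ℕ)) (ε : ℝ) : Set Plane := (thick ε (fg P))ᶜ ∩ (thick (2 * ε) (fg G))ᶜ
def FPset (P G : Set (ℕ × ℕ)) (ε : ℝ) : Set Plane := thick ε (fg P) ∩ (thick (2 * ε) (fg G))ᶜ
def FNset (P G : Set (ℕ × ℕ)) (ε : ℝ) : Set Plane := (thick ε (fg P))ᶜ ∩ thick (2 * ε) (fg G)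

/-- A component `C` (of `FP` or `FN`) is regular: exactly one component of `TP` and exactly
one component of `TN` share a boundary edge with it. -/
def RegularComp (P G : Set (ℕ × ℕ)) (ε : ℝ) (C : Set Plane) : Prop :=
  (∃! T : Set Plane, IsCompOf T (TPset P G ε) ∧ SharesEdge T C) ∧
  (∃! T : Set Plane, IsCompOf T (TNset P G ε) ∧ SharesEdge T C)

/-- The zero-loss hypothesis: every component of `FP` and every component of `FN` is regular. -/
def ZeroLoss (P G : Set (ℕ × ℕ)) (ε : ℝ) : Prop :=
  (∀ C : Set Plane, IsCompOf C (FPset P G ε) → RegularComp P G ε C) ∧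
  (∀ C : Set Plane, IsCompOf C (FNset P G ε) → RegularComp P G ε C)

/-!
The thickenings of `P` and `G` are unions of closed cells of one rectangular grid, so the theorem is
about two cell complexes `A` and `K` and a component `C` of `A \ K`, and it suffices to remove `C`
from `A` by elementary collapses: pushing a closed edge or square in from a free face is a strong
deformation retraction.

First erode `C` from outside: as long as possible, remove a square of `C` together with an edge of
`C` whose other side is no longer, or never was, covered by `A`. As `C` is connected and touches
`TN`, this uses up all squares. Then grow a forest of edges of `C` from `A \ C`: as long as
possible, attach a remaining edge together with its other, new endpoint. As `C` is connected and
touches `TP`, this reaches all vertices; the eroded edges do not matter for that, because an edge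
removed with a square can be replaced by the other three edges of the square. Undoing the growth is
a sequence of collapses.

It remains to see that no edge `e` of `C` is left over. Since `C` touches only one component of
`TP`, the endpoints of such an `e` are joined by a path in the forest and `A ∩ K`, and by the mod 2
Jordan curve theorem the closed path separates the two sides of `e`. But from either side one gets
out of `A` through eroded edges, which are not on the path, and since `C` touches only one component
of `TN`, the outer squares reached are joined in the complement of `A ∪ K`. This is a contradiction.
-/

/-! ### Strong deformation retractions in the plane -/

theorem SDR.refl (X : Set Plane) : SDR X X :=
  ⟨⟨Prod.fst, continuous_fst⟩, fun _ ↦ rfl, fun x ↦ x.2, fun _ _ _ ↦ rfl⟩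

theorem sdr_iff_homotopicRel {X A : Set Plane} :
    SDR X A ↔ ∃ r : C(X, X), (∀ x, (r x : Plane) ∈ A) ∧
      (ContinuousMap.id X).HomotopicRel r {x | (x : Plane) ∈ A} := by
  constructor
  · rintro ⟨H, hzero, hone, hfix⟩
    exact ⟨H.comp (.prodMk (.id X) (.const X 1)), hone,
      ⟨⟨⟨H.comp .prodSwap, hzero, fun _ ↦ rfl⟩, fun t x hx ↦ hfix x hx t⟩⟩⟩
  · rintro ⟨r, hr, ⟨F⟩⟩
    exact ⟨F.toContinuousMap.comp .prodSwap, F.map_zero_left,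
      fun x ↦ (congrArg (fun y : X ↦ (y : Plane) ∈ A) (F.map_one_left x)).mpr (hr x),
      fun a ha t ↦ F.prop t a ha⟩

theorem SDR.trans {X A B : Set Plane} (hAX : A ⊆ X) (hBA : B ⊆ A) (hXA : SDR X A)
    (hAB : SDR A B) : SDR X B := by
  obtain ⟨r, hrA, ⟨F⟩⟩ := sdr_iff_homotopicRel.1 hXA
  obtain ⟨H, hzero, hone, hfix⟩ := hAB
  let retract : C(X, A) := ⟨fun x ↦ ⟨r x, hrA x⟩, by fun_prop⟩
  let incl : C(A, X) := ⟨inclusion hAX, continuous_inclusion hAX⟩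
  have retract_fix (x : X) (hx : (x : Plane) ∈ B) : retract x = ⟨x, hBA hx⟩ :=
    Subtype.ext (congrArg Subtype.val (F.fst_eq_snd (hBA hx)).symm :)
  have F' : (ContinuousMap.id X).HomotopyRel r {x | (x : Plane) ∈ B} :=
    ⟨F.toHomotopy, fun t x hx ↦ F.prop t x (hBA hx)⟩
  let K : C(unitInterval × X, X) :=
    incl.comp (H.comp ((retract.comp .snd).prodMk .fst))
  have K_fix (t : unitInterval) (x : X) (hx : (x : Plane) ∈ B) : K (t, x) = r x := by
    change incl (H (retract x, t)) = r x
    rw [hfix (retract x) (by rwa [retract_fix x hx]) t]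
    rfl
  refine sdr_iff_homotopicRel.2 ⟨⟨fun x ↦ K (1, x), by fun_prop⟩, fun x ↦ hone _, ⟨F'.trans ?_⟩⟩
  exact ⟨⟨K, fun x ↦ congrArg incl (hzero _), fun _ ↦ rfl⟩, K_fix⟩

theorem SDR.of_segment {X A : Set Plane} {r : Plane → Plane} (hr : ContinuousOn r X)
    (hrA : MapsTo r X A) (hfix : ∀ p ∈ A, r p = p) (hseg : ∀ p ∈ X, segment ℝ p (r p) ⊆ X) :
    SDR X A := by
  refine ⟨⟨fun q ↦ ⟨AffineMap.lineMap (q.1 : Plane) (r q.1) (q.2 : ℝ), hseg q.1 q.1.2 ?_⟩, ?_⟩,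
    fun x ↦ ?_, fun x ↦ ?_, fun a ha t ↦ ?_⟩
  · rw [segment_eq_image_lineMap]
    exact ⟨q.2, q.2.2, rfl⟩
  · refine Continuous.subtype_mk ?_ _
    have : Continuous fun q : X × unitInterval ↦ r q.1 :=
      (continuousOn_iff_continuous_domRestrict.1 hr).comp continuous_fst
    have time : Continuous fun q : X × unitInterval ↦ (q.2 : ℝ) := by fun_prop
    simp only [AffineMap.lineMap_apply_module']
    exact (time.smul (this.sub (by fun_prop))).add (by fun_prop)
  · exact Subtype.ext (by simp)
  · simpa using hrA x.2
  · exact Subtype.ext (by simp [hfix a ha])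

theorem SDR.union_convex {Y Q : Set Plane} {r : Plane → Plane} (hY : IsClosed Y) (hQ : IsClosed Q)
    (hconv : Convex ℝ Q) (hr : ContinuousOn r Q) (hrQ : MapsTo r Q (Y ∩ Q))
    (hfix : ∀ p ∈ Q, p ∈ Y → r p = p) : SDR (Y ∪ Q) Y := by
  classical
  have eqY : EqOn (Y.piecewise id r) id Y := Y.piecewise_eqOn id r
  have eqQ : EqOn (Y.piecewise id r) r Q := fun p hp ↦ by
    by_cases hpY : p ∈ Y
    · simp [hpY, hfix p hp hpY]
    · simp [hpY]
  refine SDR.of_segment (r := Y.piecewise id r)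
    ((continuousOn_id.congr eqY).union_of_isClosed (hr.congr eqQ) hY hQ) ?_ eqY ?_
  · rintro p (hp | hp)
    · rwa [eqY hp]
    · rw [eqQ hp]
      exact (hrQ hp).1
  · rintro p (hp | hp)
    · rw [eqY hp, id, segment_same]
      exact singleton_subset_iff.2 (.inl hp)
    · rw [eqQ hp]
      exact (hconv.segment_subset hp (hrQ hp).2).trans subset_union_right

/-- The gauge of the half-strip `{u ≥ 0, |v| ≤ 1}` measured from `(2, 0)`. Dividing the vector from
`(2, 0)` to `(u, v)` by it projects `[0, 1] × [-1, 1]` centrally onto the three sides other than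
`u = 1`. -/
def openBoxGauge (u v : ℝ) : ℝ := max ((2 - u) / 2) |v|

namespace openBoxGauge

variable {u v : ℝ}

theorem pos (hu : u ≤ 1) : 0 < openBoxGauge u v :=
  lt_max_of_lt_left (by linarith)

theorem le_one (hu : 0 ≤ u) (hv : |v| ≤ 1) : openBoxGauge u v ≤ 1 :=
  max_le (by linarith) hv

theorem eq_one (hu : 0 ≤ u) (hv : |v| ≤ 1) (h : u = 0 ∨ |v| = 1) : openBoxGauge u v = 1 := by
  refine (le_one hu hv).antisymm ?_
  rcases h with rfl | h
  · exact le_max_of_le_left (by norm_num)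
  · exact le_max_of_le_right h.ge

theorem two_add_div_mem (hu : u ∈ Icc (0 : ℝ) 1) (hv : |v| ≤ 1) :
    2 + (u - 2) / openBoxGauge u v ∈ Icc (0 : ℝ) 1 := by
  have hpos : 0 < openBoxGauge u v := pos hu.2
  have hle : (2 - u) / 2 ≤ openBoxGauge u v := le_max_left _ _
  have hone := le_one hu.1 hv
  constructor
  · have : -2 ≤ (u - 2) / openBoxGauge u v := by rw [le_div_iff₀ hpos]; linarith
    linarith
  · have : (u - 2) / openBoxGauge u v ≤ -1 := by rw [div_le_iff₀ hpos]; linarith [hu.2]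
    linarith

theorem abs_div_le_one : |v / openBoxGauge u v| ≤ 1 := by
  have hle : |v| ≤ |openBoxGauge u v| := (le_max_right _ _).trans (le_abs_self _)
  rw [abs_div]
  exact div_le_one_of_le₀ hle (abs_nonneg _)

theorem two_add_div_eq_zero_or (hu : u ≤ 1) :
    2 + (u - 2) / openBoxGauge u v = 0 ∨ |v / openBoxGauge u v| = 1 := by
  have hpos : 0 < openBoxGauge u v := pos hu
  rcases max_choice ((2 - u) / 2) |v| with h | h
  · left
    rw [openBoxGauge, h]
    have : 2 - u ≠ 0 := by linarith
    field_simp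
    ring
  · right
    rw [abs_div, abs_of_pos hpos, openBoxGauge, h]
    exact div_self (by rw [← h]; exact hpos.ne')

end openBoxGauge

/-- The box with `i`-th coordinate between `α` and `β` and `j`-th coordinate in `[γ, δ]`. -/
def box (i j : Fin 2) (α β γ δ : ℝ) : Set Plane := {p | p i ∈ uIcc α β ∧ p j ∈ Icc γ δ}

theorem isClosed_box (i j : Fin 2) (α β γ δ : ℝ) : IsClosed (box i j α β γ δ) :=
  (isClosed_Icc.preimage (continuous_apply i)).inter (isClosed_Icc.preimage (continuous_apply j))

theorem convex_box (i j : Fin 2) (α β γ δ : ℝ) : Convex ℝ (box i j α β γ δ) :=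
  ((convex_uIcc α β).linear_preimage (LinearMap.proj (R := ℝ) (φ := fun _ : Fin 2 ↦ ℝ) i)).inter
    ((convex_Icc γ δ).linear_preimage (LinearMap.proj (R := ℝ) (φ := fun _ : Fin 2 ↦ ℝ) j))

/-- `box i j α β γ δ` in coordinates `(u, v)` running over `[0, 1] × [-1, 1]`. -/
def boxPoint (i : Fin 2) (α β γ δ : ℝ) (u v : ℝ) : Plane :=
  fun k ↦ if k = i then α + (β - α) * u else (γ + δ) / 2 + (δ - γ) / 2 * v

section Collapse

variable {i j : Fin 2} {α β γ δ : ℝ}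

theorem boxPoint_self (u v : ℝ) : boxPoint i α β γ δ u v i = α + (β - α) * u := if_pos rfl

theorem boxPoint_of_ne (hij : i ≠ j) (u v : ℝ) :
    boxPoint i α β γ δ u v j = (γ + δ) / 2 + (δ - γ) / 2 * v := if_neg hij.symm

theorem boxPoint_mem_box (hij : i ≠ j) (hγδ : γ ≤ δ) {u v : ℝ} (hu : u ∈ Icc (0 : ℝ) 1)
    (hv : |v| ≤ 1) : boxPoint i α β γ δ u v ∈ box i j α β γ δ := by
  refine ⟨?_, ?_⟩
  · rw [boxPoint_self, ← segment_eq_uIcc, segment_eq_image']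
    exact ⟨u, hu, by simp [mul_comm]⟩
  · rw [boxPoint_of_ne hij]
    obtain ⟨hv₁, hv₂⟩ := abs_le.1 hv
    constructor <;> nlinarith

theorem eq_boxPoint_of_mem_box (hij : i ≠ j) (hαβ : α ≠ β) {p : Plane} (hp : p ∈ box i j α β γ δ) :
    (p i - α) / (β - α) ∈ Icc (0 : ℝ) 1 ∧ |(p j - (γ + δ) / 2) / ((δ - γ) / 2)| ≤ 1 ∧
      boxPoint i α β γ δ ((p i - α) / (β - α)) ((p j - (γ + δ) / 2) / ((δ - γ) / 2)) = p := by
  obtain ⟨hpi, hγ, hδ⟩ := hp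
  have hlen : β - α ≠ 0 := sub_ne_zero.2 hαβ.symm
  have hmid : |p j - (γ + δ) / 2| ≤ (δ - γ) / 2 := abs_le.2 ⟨by linarith, by linarith⟩
  refine ⟨?_, ?_, ?_⟩
  · rw [← segment_eq_uIcc, segment_eq_image'] at hpi
    obtain ⟨u, hu, hpu⟩ := hpi
    simpa [← hpu, hlen] using hu
  · rw [abs_div, abs_of_nonneg ((abs_nonneg _).trans hmid)]
    exact div_le_one_of_le₀ hmid ((abs_nonneg _).trans hmid)
  · ext k
    obtain rfl | rfl : k = i ∨ k = j := by omega
    · rw [boxPoint_self]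
      field_simp
      ring
    · rw [boxPoint_of_ne hij]
      rcases eq_or_ne γ δ with rfl | hne
      · simp only [sub_self, zero_div, zero_mul]
        linarith
      · have : δ - γ ≠ 0 := sub_ne_zero.2 hne.symm
        field_simp
        ring

theorem box_coord_eq_zero_or_abs_eq_one {p : Plane}
    (hp : p i = α ∨ γ < δ ∧ (p j = γ ∨ p j = δ)) :
    (p i - α) / (β - α) = 0 ∨ |(p j - (γ + δ) / 2) / ((δ - γ) / 2)| = 1 := by
  rcases hp with hp | ⟨hlt, hp⟩
  · exact .inl (by simp [hp])
  · have hhalf : 0 < (δ - γ) / 2 := by linarith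
    right
    rw [abs_div, abs_of_pos hhalf, div_eq_one_iff_eq hhalf.ne']
    rcases hp with hp | hp <;> rw [hp]
    · rw [abs_of_neg] <;> linarith
    · rw [abs_of_pos] <;> linarith

theorem boxPoint_mem_three_sides (hij : i ≠ j) {u v : ℝ}
    (h : u = 0 ∨ γ < δ ∧ |v| = 1) :
    boxPoint i α β γ δ u v i = α ∨
      γ < δ ∧ (boxPoint i α β γ δ u v j = γ ∨ boxPoint i α β γ δ u v j = δ) := by
  rw [boxPoint_self, boxPoint_of_ne hij]
  rcases h with rfl | ⟨hlt, hv⟩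
  · simp
  · refine .inr ⟨hlt, ?_⟩
    rcases eq_or_eq_neg_of_abs_eq hv with rfl | rfl
    · right; ring
    · left; ring

/-- For `γ = δ` the box is a segment and the retraction shrinks it to its end `p i = α`. -/
theorem SDR.union_box (hij : i ≠ j) (hαβ : α ≠ β) (hγδ : γ ≤ δ) {Y : Set Plane} (hY : IsClosed Y)
    (hYbox : ∀ p ∈ box i j α β γ δ, p ∈ Y ↔ p i = α ∨ γ < δ ∧ (p j = γ ∨ p j = δ)) :
    SDR (Y ∪ box i j α β γ δ) Y := by
  let u (p : Plane) : ℝ := (p i - α) / (β - α)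
  let v (p : Plane) : ℝ := (p j - (γ + δ) / 2) / ((δ - γ) / 2)
  let M (p : Plane) : ℝ := openBoxGauge (u p) (v p)
  let r (p : Plane) : Plane := boxPoint i α β γ δ (2 + (u p - 2) / M p) (v p / M p)
  have coord (p) (hp : p ∈ box i j α β γ δ) := eq_boxPoint_of_mem_box hij hαβ hp
  have hM (p) (hp : p ∈ box i j α β γ δ) : M p ≠ 0 := (openBoxGauge.pos (coord p hp).1.2).ne'
  have hr : ContinuousOn r (box i j α β γ δ) := by
    have hcont : Continuous M := by unfold M openBoxGauge; fun_prop
    refine continuousOn_pi.2 fun k ↦ ?_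
    simp only [r, boxPoint]
    split_ifs <;> fun_prop (disch := assumption)
  have hrbox : MapsTo r (box i j α β γ δ) (box i j α β γ δ) := fun p hp ↦
    boxPoint_mem_box hij hγδ (openBoxGauge.two_add_div_mem (coord p hp).1 (coord p hp).2.1)
      openBoxGauge.abs_div_le_one
  have hrY (p) (hp : p ∈ box i j α β γ δ) : r p ∈ Y := by
    refine (hYbox _ (hrbox hp)).2 (boxPoint_mem_three_sides hij ?_)
    refine (openBoxGauge.two_add_div_eq_zero_or (coord p hp).1.2).imp_right fun hone ↦ ⟨?_, hone⟩
    -- If `γ = δ` then `v p = x / 0 = 0`.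
    refine hγδ.lt_of_ne fun heq ↦ ?_
    simp [v, heq] at hone
  have hfix (p) (hp : p ∈ box i j α β γ δ) (hpY : p ∈ Y) : r p = p := by
    obtain ⟨hu, hv, heq⟩ := coord p hp
    have hone : M p = 1 := openBoxGauge.eq_one hu.1 hv
      (box_coord_eq_zero_or_abs_eq_one ((hYbox p hp).1 hpY))
    simp only [r, hone, div_one, add_sub_cancel]
    exact heq
  exact SDR.union_convex hY (isClosed_box i j α β γ δ) (convex_box i j α β γ δ) hr
    (fun p hp ↦ ⟨hrY p hp, hrbox hp⟩) hfix

end Collapse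

/-! ### Cells of a grid -/

/-- An index of a cell of a rectangular grid in the plane: in each coordinate an even number stands
for a grid line and an odd number for the open interval between two consecutive grid lines. -/
@[ext]
structure Cell where
  x : ℤ
  y : ℤ

/-- In dimension one, the cell `m` lies in the closure of the cell `n`. -/
abbrev IntFace (m n : ℤ) : Prop := n - n % 2 ≤ m ∧ m ≤ n + n % 2

namespace Cell

instance : PartialOrder Cell where
  le a b := IntFace a.x b.x ∧ IntFace a.y b.y
  le_refl a := by omega
  le_trans a b c := by omega
  le_antisymm a b hab hba := by ext <;> omega

theorem le_def {a b : Cell} : a ≤ b ↔ IntFace a.x b.x ∧ IntFace a.y b.y := Iff.rfl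

/-- The cell is a point: an intersection of two grid lines. -/
def IsVertex (a : Cell) : Prop := a.x % 2 = 0 ∧ a.y % 2 = 0

/-- The cell has dimension one: exactly one of its coordinates is odd. -/
def IsEdge (a : Cell) : Prop := (a.x + a.y) % 2 = 1

/-- The cell has dimension two. -/
def IsSquare (a : Cell) : Prop := a.x % 2 = 1 ∧ a.y % 2 = 1

theorem trichotomy (a : Cell) : a.IsVertex ∨ a.IsEdge ∨ a.IsSquare := by
  simp only [IsVertex, IsEdge, IsSquare]; omega

variable {a b e s v : Cell}

theorem IsVertex.eq_of_le (hb : b.IsVertex) (hab : a ≤ b) : a = b := by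
  simp only [le_def, IsVertex, Cell.ext_iff] at *; omega

theorem IsSquare.eq_of_le (ha : a.IsSquare) (hab : a ≤ b) : a = b := by
  simp only [le_def, IsSquare, Cell.ext_iff] at *; omega

theorem exists_isVertex_le (a : Cell) : ∃ v, v.IsVertex ∧ v ≤ a :=
  ⟨⟨a.x - a.x % 2, a.y - a.y % 2⟩, by simp only [IsVertex]; omega, by simp only [le_def]; omega⟩

theorem exists_isSquare_ge (a : Cell) : ∃ s, s.IsSquare ∧ a ≤ s :=
  ⟨⟨a.x + 1 - a.x % 2, a.y + 1 - a.y % 2⟩, by simp only [IsSquare]; omega,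
    by simp only [le_def]; omega⟩

/-- `u` and `v` are the two endpoints of the edge `e`. -/
structure AreEnds (u v e : Cell) : Prop where
  left : u.IsVertex
  right : v.IsVertex
  ne : u ≠ v
  left_le : u ≤ e
  right_le : v ≤ e
  isEdge : e.IsEdge

/-- `s` and `t` are the two squares on either side of the edge `e`. -/
structure AreSides (s t e : Cell) : Prop where
  left : s.IsSquare
  right : t.IsSquare
  ne : s ≠ t
  le_left : e ≤ s
  le_right : e ≤ t
  isEdge : e.IsEdge

theorem IsEdge.exists_areEnds (he : e.IsEdge) : ∃ u v, AreEnds u v e := by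
  refine ⟨⟨e.x - e.x % 2, e.y - e.y % 2⟩, ⟨e.x + e.x % 2, e.y + e.y % 2⟩, ?_, ?_, ?_, ?_, ?_, ?_⟩
  all_goals simp only [IsEdge, IsVertex, le_def, ne_eq, Cell.ext_iff] at *; omega

theorem IsEdge.exists_areSides (he : e.IsEdge) : ∃ s t, AreSides s t e := by
  refine ⟨⟨e.x - 1 + e.x % 2, e.y - 1 + e.y % 2⟩, ⟨e.x + 1 - e.x % 2, e.y + 1 - e.y % 2⟩,
    ?_, ?_, ?_, ?_, ?_, ?_⟩
  all_goals simp only [IsEdge, IsSquare, le_def, ne_eq, Cell.ext_iff] at *; omega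

theorem AreSides.symm {t : Cell} (h : AreSides s t e) : AreSides t s e :=
  ⟨h.right, h.left, h.ne.symm, h.le_right, h.le_left, h.isEdge⟩

theorem AreEnds.symm {u : Cell} (h : AreEnds u v e) : AreEnds v u e :=
  ⟨h.right, h.left, h.ne.symm, h.right_le, h.left_le, h.isEdge⟩

theorem AreEnds.eq_or {u : Cell} (h : AreEnds u v e) (hae : a ≤ e) : a = e ∨ a = u ∨ a = v := by
  obtain ⟨hu, hv, hne, hue, hve, he⟩ := h
  simp only [IsEdge, IsVertex, le_def, ne_eq, Cell.ext_iff] at *; omega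

theorem AreSides.eq_or {t : Cell} (h : AreSides s t e) (hea : e ≤ a) : a = e ∨ a = s ∨ a = t := by
  obtain ⟨hs, ht, hne, hes, het, he⟩ := h
  simp only [IsEdge, IsSquare, le_def, ne_eq, Cell.ext_iff] at *; omega

/-- The vertex colouring `f` takes the same value at all vertices of `b`. -/
def EndsAgree (f : Cell → Prop) (b : Cell) : Prop :=
  ∀ u v, u.IsVertex → v.IsVertex → u ≤ b → v ≤ b → (f u ↔ f v)

/-- The square colouring `f` takes the same value at all squares around `a`. -/
def SidesAgree (f : Cell → Prop) (a : Cell) : Prop :=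
  ∀ s t, s.IsSquare → t.IsSquare → a ≤ s → a ≤ t → (f s ↔ f t)

theorem IsVertex.endsAgree {f : Cell → Prop} (hv : v.IsVertex) : EndsAgree f v :=
  fun u w _ _ hu hw ↦ by rw [hv.eq_of_le hu, hv.eq_of_le hw]

theorem IsSquare.sidesAgree {f : Cell → Prop} (hs : s.IsSquare) : SidesAgree f s :=
  fun t w _ _ ht hw ↦ by rw [← hs.eq_of_le ht, ← hs.eq_of_le hw]

theorem AreEnds.endsAgree_iff {f : Cell → Prop} {u : Cell} (h : AreEnds u v e) :
    EndsAgree f e ↔ (f u ↔ f v) := by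
  refine ⟨fun hf ↦ hf u v h.left h.right h.left_le h.right_le, fun huv ↦ ?_⟩
  have vertex_eq (w) (hw : w.IsVertex) (hwe : w ≤ e) : w = u ∨ w = v := by
    refine (h.eq_or hwe).resolve_left ?_
    rintro rfl
    exact h.ne ((hw.eq_of_le h.left_le).trans (hw.eq_of_le h.right_le).symm)
  intro w w' hw hw' hwe hwe'
  rcases vertex_eq w hw hwe with rfl | rfl <;> rcases vertex_eq w' hw' hwe' with rfl | rfl <;> tauto

theorem AreSides.sidesAgree_iff {f : Cell → Prop} {t : Cell} (h : AreSides s t e) :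
    SidesAgree f e ↔ (f s ↔ f t) := by
  refine ⟨fun hf ↦ hf s t h.left h.right h.le_left h.le_right, fun hst ↦ ?_⟩
  have square_eq (w) (hw : w.IsSquare) (hew : e ≤ w) : w = s ∨ w = t := by
    refine (h.eq_or hew).resolve_left ?_
    rintro rfl
    exact h.ne ((hw.eq_of_le h.le_left).symm.trans (hw.eq_of_le h.le_right))
  intro w w' hw hw' hwe hwe'
  rcases square_eq w hw hwe with rfl | rfl <;> rcases square_eq w' hw' hwe' with rfl | rfl <;> tauto

theorem endsAgree_of_edges {f : Cell → Prop} (h : ∀ e ≤ b, e.IsEdge → EndsAgree f e) :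
    EndsAgree f b := by
  have h' (c) (hc : c ≤ b) (hc' : ¬c.IsSquare) : EndsAgree f c := by
    rcases c.trichotomy with hc'' | hc'' | hc''
    exacts [hc''.endsAgree, h c hc hc'', absurd hc'' hc']
  intro u v hu hv hub hvb
  calc f u ↔ f ⟨u.x, v.y⟩ := h' ⟨u.x, b.y⟩ ?_ ?_ _ _ hu ?_ ?_ ?_
    _ ↔ f v := h' ⟨b.x, v.y⟩ ?_ ?_ _ _ ?_ hv ?_ ?_
  all_goals simp only [le_def, IsVertex, IsSquare] at *; omega

theorem sidesAgree_of_edges {f : Cell → Prop} (h : ∀ e, a ≤ e → e.IsEdge → SidesAgree f e) :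
    SidesAgree f a := by
  have h' (c) (hc : a ≤ c) (hc' : ¬c.IsVertex) : SidesAgree f c := by
    rcases c.trichotomy with hc'' | hc'' | hc''
    exacts [absurd hc'' hc', h c hc hc'', hc''.sidesAgree]
  intro s t hs ht has hat
  calc f s ↔ f ⟨s.x, t.y⟩ := h' ⟨s.x, a.y⟩ ?_ ?_ _ _ hs ?_ ?_ ?_
    _ ↔ f t := h' ⟨a.x, t.y⟩ ?_ ?_ _ _ ?_ ht ?_ ?_
  all_goals simp only [le_def, IsVertex, IsSquare] at *; omega

theorem IsSquare.endsAgree_of_other_edges {f : Cell → Prop} (hs : s.IsSquare) (he : e.IsEdge)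
    (hes : e ≤ s) (h : ∀ e' ≤ s, e'.IsEdge → e' ≠ e → EndsAgree f e') : EndsAgree f e := by
  intro u v hu hv hue hve
  by_cases huv : u = v
  · rw [huv]
  -- Point reflection in the centre of `s` carries `e` to the opposite edge of `s`.
  calc f u ↔ f ⟨2 * s.x - v.x, 2 * s.y - v.y⟩ :=
        h ⟨u.x + s.x - e.x, u.y + s.y - e.y⟩ ?_ ?_ ?_ _ _ hu ?_ ?_ ?_
    _ ↔ f ⟨2 * s.x - u.x, 2 * s.y - u.y⟩ :=
        h ⟨2 * s.x - e.x, 2 * s.y - e.y⟩ ?_ ?_ ?_ _ _ ?_ ?_ ?_ ?_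
    _ ↔ f v := h ⟨v.x + s.x - e.x, v.y + s.y - e.y⟩ ?_ ?_ ?_ _ _ ?_ hv ?_ ?_
  all_goals simp only [le_def, IsVertex, IsEdge, IsSquare, ne_eq, Cell.ext_iff] at *; omega

end Cell

section Complexes

open Cell

section SameComponent

variable {S : Set Cell} {a b : Cell} {f : Cell → Prop}

/-- The colouring `f` is constant on the components of `S` for the face relation. -/
def FaceInvariant (S : Set Cell) (f : Cell → Prop) : Prop :=
  ∀ a ∈ S, ∀ b ∈ S, a ≤ b → (f a ↔ f b)

/-- `a` and `b` lie in the same component of `S` for the face relation, expressed through the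
colourings that are constant on components. -/
def SameComponent (S : Set Cell) (a b : Cell) : Prop :=
  ∀ f, FaceInvariant S f → (f a ↔ f b)

theorem SameComponent.vertex_iff (h : SameComponent S a b) (ha : a ∈ S) (hb : b ∈ S)
    (hf : ∀ c ∈ S, EndsAgree f c) {u v : Cell} (hu : u.IsVertex) (hv : v.IsVertex)
    (hua : u ≤ a) (hvb : v ≤ b) : f u ↔ f v := by
  have some_iff (c) (hc : c ∈ S) (w) (hw : w.IsVertex) (hwc : w ≤ c) :
      (∃ w', w'.IsVertex ∧ w' ≤ c ∧ f w') ↔ f w :=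
    ⟨fun ⟨w', hw', hwc', hfw'⟩ ↦ (hf c hc w' w hw' hw hwc' hwc).1 hfw', fun hfw ↦ ⟨w, hw, hwc, hfw⟩⟩
  rw [← some_iff a ha u hu hua, ← some_iff b hb v hv hvb]
  refine h (fun c ↦ ∃ w', w'.IsVertex ∧ w' ≤ c ∧ f w') fun c hc d hd hcd ↦ ?_
  obtain ⟨w, hw, hwc⟩ := c.exists_isVertex_le
  exact (some_iff c hc w hw hwc).trans (some_iff d hd w hw (hwc.trans hcd)).symm

theorem SameComponent.square_iff (h : SameComponent S a b) (ha : a ∈ S) (hb : b ∈ S)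
    (hf : ∀ c ∈ S, SidesAgree f c) {s t : Cell} (hs : s.IsSquare) (ht : t.IsSquare)
    (has : a ≤ s) (hbt : b ≤ t) : f s ↔ f t := by
  have some_iff (c) (hc : c ∈ S) (w) (hw : w.IsSquare) (hcw : c ≤ w) :
      (∃ w', w'.IsSquare ∧ c ≤ w' ∧ f w') ↔ f w :=
    ⟨fun ⟨w', hw', hcw', hfw'⟩ ↦ (hf c hc w' w hw' hw hcw' hcw).1 hfw', fun hfw ↦ ⟨w, hw, hcw, hfw⟩⟩
  rw [← some_iff a ha s hs has, ← some_iff b hb t ht hbt]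
  refine h (fun c ↦ ∃ w', w'.IsSquare ∧ c ≤ w' ∧ f w') fun c hc d hd hcd ↦ ?_
  obtain ⟨w, hw, hdw⟩ := d.exists_isSquare_ge
  exact (some_iff c hc w hw (hcd.trans hdw)).trans (some_iff d hd w hw hdw).symm

end SameComponent

/-! ### Cycles modulo 2 separate the plane -/

/-- The coefficient at the vertex `v` of the boundary of the chain `z` with mod 2 coefficients. -/
def boundary (z : Cell →₀ ZMod 2) (v : Cell) : ZMod 2 :=
  z ⟨v.x - 1, v.y⟩ + z ⟨v.x + 1, v.y⟩ + z ⟨v.x, v.y - 1⟩ + z ⟨v.x, v.y + 1⟩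

theorem boundary_zero (v : Cell) : boundary 0 v = 0 := by
  simp [boundary]

theorem boundary_add (z z' : Cell →₀ ZMod 2) (v : Cell) :
    boundary (z + z') v = boundary z v + boundary z' v := by
  simp only [boundary, Finsupp.add_apply]
  ring

theorem Cell.AreEnds.boundary_single {u v e w : Cell} (h : AreEnds u v e) (hw : w.IsVertex) :
    boundary (.single e 1) w = Finsupp.single u 1 w + Finsupp.single v 1 w := by
  classical
  obtain ⟨hu, hv, hne, hue, hve, he⟩ := h
  simp only [boundary, Finsupp.single_apply, Cell.ext_iff, IsVertex, IsEdge, le_def, ne_eq] at *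
  split_ifs <;> first | rfl | (exfalso; omega)

/-- `z` is a chain of edges of `M` with boundary `u + v` modulo 2. -/
structure IsPathChain (M : Set Cell) (u v : Cell) (z : Cell →₀ ZMod 2) : Prop where
  eq_zero : ∀ a, ¬(a.IsEdge ∧ a ∈ M) → z a = 0
  boundary_eq : ∀ w, w.IsVertex → boundary z w = Finsupp.single u 1 w + Finsupp.single v 1 w

namespace IsPathChain

variable {M : Set Cell} {u v w e : Cell} {z z' : Cell →₀ ZMod 2}

theorem zero (M : Set Cell) (u : Cell) : IsPathChain M u u 0 where
  eq_zero _ _ := rfl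
  boundary_eq _ _ := by rw [boundary_zero, CharTwo.add_self_eq_zero]

theorem single (h : AreEnds u v e) (he : e ∈ M) : IsPathChain M u v (.single e 1) where
  eq_zero _ ha := Finsupp.single_eq_of_ne (by rintro rfl; exact ha ⟨h.isEdge, he⟩)
  boundary_eq _ hw := h.boundary_single hw

theorem add (h : IsPathChain M u v z) (h' : IsPathChain M v w z') :
    IsPathChain M u w (z + z') where
  eq_zero a ha := by simp [h.eq_zero a ha, h'.eq_zero a ha]
  boundary_eq x hx := by
    rw [boundary_add, h.boundary_eq x hx, h'.boundary_eq x hx]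
    linear_combination CharTwo.add_self_eq_zero (Finsupp.single v (1 : ZMod 2) x)

end IsPathChain

theorem SameComponent.exists_isPathChain {M : Set Cell} (hM : IsLowerSet M) {u v : Cell}
    (h : SameComponent M u v) (hu : u.IsVertex) (hv : v.IsVertex) (huM : u ∈ M) (hvM : v ∈ M) :
    ∃ z, IsPathChain M u v z := by
  refine (h.vertex_iff (f := fun w ↦ ∃ z, IsPathChain M u w z) huM hvM (fun c hc ↦ ?_)
    hu hv le_rfl le_rfl).1 ⟨0, .zero M u⟩
  refine endsAgree_of_edges fun e hec he ↦ ?_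
  obtain ⟨w, w', hw⟩ := he.exists_areEnds
  have heM := hM hec hc
  exact hw.endsAgree_iff.2
    ⟨fun ⟨z, hz⟩ ↦ ⟨_, hz.add (.single hw heM)⟩, fun ⟨z, hz⟩ ↦ ⟨_, hz.add (.single hw.symm heM)⟩⟩

section Primitive

/-- The sum of the coefficients of `z` on row `n` over the columns from `L + 1` to `m`. -/
def leftSum (z : Cell →₀ ZMod 2) (L m n : ℤ) : ZMod 2 := ∑ k ∈ Finset.Ioc L m, z ⟨k, n⟩

variable {z : Cell →₀ ZMod 2} {L : ℤ}

theorem exists_forall_le_eq_zero (z : Cell →₀ ZMod 2) : ∃ L, ∀ k ≤ L, ∀ n, z ⟨k, n⟩ = 0 := by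
  classical
  obtain ⟨L, hL⟩ := Finset.exists_le (α := ℤᵒᵈ) (z.support.image Cell.x)
  refine ⟨OrderDual.ofDual L - 1, fun k hk n ↦ Finsupp.notMem_support_iff.1 fun hkn ↦ ?_⟩
  have : OrderDual.ofDual L ≤ k := hL k (Finset.mem_image_of_mem Cell.x hkn)
  omega

theorem leftSum_of_le {m : ℤ} (hm : m ≤ L) (n : ℤ) : leftSum z L m n = 0 := by
  rw [leftSum, Finset.Ioc_eq_empty_of_le hm, Finset.sum_empty]

theorem leftSum_add_one (hL : ∀ k ≤ L, ∀ n, z ⟨k, n⟩ = 0) (m n : ℤ) :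
    leftSum z L (m + 1) n = leftSum z L m n + z ⟨m + 1, n⟩ := by
  rcases lt_or_ge m L with hm | hm
  · rw [leftSum_of_le hm, leftSum_of_le hm.le, hL _ hm, add_zero]
  · rw [leftSum, ← Finset.insert_Ioc_right_eq_Ioc_add_one hm, Finset.sum_insert (by simp), add_comm,
      leftSum]

theorem leftSum_add_leftSum (hL : ∀ k ≤ L + 1, ∀ n, z ⟨k, n⟩ = 0)
    (hz : ∀ a, ¬a.IsEdge → z a = 0) (hb : ∀ v, v.IsVertex → boundary z v = 0)
    {n : ℤ} (hn : n % 2 = 0) (m : ℤ) :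
    leftSum z L m (n - 1) + leftSum z L m (n + 1) = z ⟨m, n⟩ + z ⟨m + 1, n⟩ := by
  rcases le_total m L with hm | hm
  · rw [leftSum_of_le hm, leftSum_of_le hm, hL m (by omega), hL (m + 1) (by omega)]
  induction m, hm using Int.leInduction with
  | base => rw [leftSum_of_le le_rfl, leftSum_of_le le_rfl, hL L (by omega), hL (L + 1) le_rfl]
  | succ m _ ih =>
    have hL' : ∀ k ≤ L, ∀ n, z ⟨k, n⟩ = 0 := fun k hk ↦ hL k (by omega)
    rw [leftSum_add_one hL', leftSum_add_one hL']
    have local_eq : z ⟨m + 1, n - 1⟩ + z ⟨m + 1, n + 1⟩ = z ⟨m, n⟩ + z ⟨m + 1 + 1, n⟩ := by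
      rcases Int.emod_two_eq_zero_or_one m with hm2 | hm2
      · rw [hz ⟨m + 1, n - 1⟩, hz ⟨m + 1, n + 1⟩, hz ⟨m, n⟩, hz ⟨m + 1 + 1, n⟩]
        all_goals simp only [IsEdge]; omega
      · have := hb ⟨m + 1, n⟩ ⟨by simp only; omega, hn⟩
        simp only [boundary, add_sub_cancel_right] at this
        rw [← CharTwo.add_eq_zero, ← this]
        ring
    calc _ = (z ⟨m, n⟩ + z ⟨m + 1, n⟩) + (z ⟨m, n⟩ + z ⟨m + 1 + 1, n⟩) := by
          rw [← ih, ← local_eq]; ring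
      _ = z ⟨m + 1, n⟩ + z ⟨m + 1 + 1, n⟩ := by
          linear_combination CharTwo.add_self_eq_zero (z ⟨m, n⟩)

/-- The plane has no first homology modulo 2. -/
theorem exists_primitive (hz : ∀ a, ¬a.IsEdge → z a = 0)
    (hb : ∀ v, v.IsVertex → boundary z v = 0) :
    ∃ c : Cell → ZMod 2, ∀ s t e, AreSides s t e → c s + c t = z e := by
  obtain ⟨L, hL⟩ := exists_forall_le_eq_zero z
  have vertical (m n : ℤ) (hm : m % 2 = 0) (hn : n % 2 = 1) :
      leftSum z (L - 1) (m - 1) n + leftSum z (L - 1) (m + 1) n = z ⟨m, n⟩ := by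
    have hL' : ∀ k ≤ L - 1, ∀ n, z ⟨k, n⟩ = 0 := fun k hk ↦ hL k (by omega)
    have step := leftSum_add_one hL' (m - 1) n
    rw [sub_add_cancel] at step
    rw [leftSum_add_one hL', step, hz ⟨m + 1, n⟩ (by simp only [IsEdge]; omega)]
    linear_combination CharTwo.add_self_eq_zero (leftSum z (L - 1) (m - 1) n)
  have horizontal (m n : ℤ) (hm : m % 2 = 1) (hn : n % 2 = 0) :
      leftSum z (L - 1) m (n - 1) + leftSum z (L - 1) m (n + 1) = z ⟨m, n⟩ := by
    rw [leftSum_add_leftSum (by simpa using hL) hz hb hn,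
      hz ⟨m + 1, n⟩ (by simp only [IsEdge]; omega), add_zero]
  refine ⟨fun a ↦ leftSum z (L - 1) a.x a.y, fun s t e h ↦ ?_⟩
  obtain ⟨hs, ht, hne, hes, het, he⟩ := h
  obtain ⟨sx, sy⟩ := s
  obtain ⟨tx, ty⟩ := t
  obtain ⟨m, n⟩ := e
  simp only [Cell.IsEdge, Cell.IsSquare, le_def, ne_eq, Cell.mk.injEq] at *
  have : (m % 2 = 0 ∧ n % 2 = 1 ∧ sy = n ∧ ty = n ∧
      (sx = m - 1 ∧ tx = m + 1 ∨ tx = m - 1 ∧ sx = m + 1)) ∨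
    (m % 2 = 1 ∧ n % 2 = 0 ∧ sx = m ∧ tx = m ∧
      (sy = n - 1 ∧ ty = n + 1 ∨ ty = n - 1 ∧ sy = n + 1)) := by omega
  rcases this with ⟨hm, hn, rfl, rfl, ⟨rfl, rfl⟩ | ⟨rfl, rfl⟩⟩ |
    ⟨hm, hn, rfl, rfl, ⟨rfl, rfl⟩ | ⟨rfl, rfl⟩⟩
  · exact vertical _ _ hm hn
  · exact (add_comm _ _).trans (vertical _ _ hm hn)
  · exact horizontal _ _ hm hn
  · exact (add_comm _ _).trans (horizontal _ _ hm hn)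

end Primitive

/-- A discrete Jordan curve theorem for the cycle formed by `e` and a path in `M`. -/
theorem exists_separating_colouring {M : Set Cell} (hM : IsLowerSet M) {u v e : Cell}
    (he : AreEnds u v e) (heM : e ∉ M) (huM : u ∈ M) (hvM : v ∈ M) (h : SameComponent M u v) :
    ∃ c : Cell → Prop, (∀ e', e'.IsEdge → e' ∉ M → e' ≠ e → SidesAgree c e') ∧ ¬SidesAgree c e := by
  obtain ⟨z, hz⟩ := h.exists_isPathChain hM he.left he.right huM hvM
  have zero_off_edges (a) (ha : ¬a.IsEdge) : (z + .single e 1 : Cell →₀ ZMod 2) a = 0 := by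
    rw [Finsupp.add_apply, hz.eq_zero a (fun h ↦ ha h.1),
      Finsupp.single_eq_of_ne (by rintro rfl; exact ha he.isEdge), add_zero]
  have cycle (w) (hw : w.IsVertex) : boundary (z + .single e 1) w = 0 := by
    rw [boundary_add, hz.boundary_eq w hw, he.boundary_single hw, CharTwo.add_self_eq_zero]
  obtain ⟨c, hc⟩ := exists_primitive zero_off_edges cycle
  refine ⟨fun s ↦ c s = 0, fun e' he' heM' hne ↦ ?_, ?_⟩
  · obtain ⟨s, t, hst⟩ := he'.exists_areSides
    have := hc s t e' hst
    rw [Finsupp.add_apply, hz.eq_zero e' (fun h ↦ heM' h.2), Finsupp.single_eq_of_ne hne, add_zero,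
      CharTwo.add_eq_zero] at this
    rw [hst.sidesAgree_iff, this]
  · obtain ⟨s, t, hst⟩ := he.isEdge.exists_areSides
    have := hc s t e hst
    rw [Finsupp.add_apply, hz.eq_zero e (fun h ↦ heM h.2), Finsupp.single_eq_same, zero_add] at this
    rw [hst.sidesAgree_iff, ← sub_eq_iff_eq_add.2 this.symm]
    generalize c t = x
    decide +revert

/-! ### Collapsing a regular component -/

/-- The subcomplex `S'` arises from the subcomplex `S` by removing a cell `b` together with a free
facet `a` of `b`. -/
def ElementaryCollapse (S S' : Set Cell) : Prop :=
  IsLowerSet S ∧ IsLowerSet S' ∧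
    ∃ a b, b ∈ S ∧ a < b ∧ (a.x = b.x ∨ a.y = b.y) ∧ S' = S \ {a, b}

/-- The subcomplex `S` collapses to `S'` through a sequence of elementary collapses. -/
abbrev Collapses : Set Cell → Set Cell → Prop := Relation.ReflTransGen ElementaryCollapse

section SameComponent

variable {S T : Set Cell} {a b c : Cell}

theorem SameComponent.trans (hab : SameComponent S a b) (hbc : SameComponent S b c) :
    SameComponent S a c :=
  fun f hf ↦ (hab f hf).trans (hbc f hf)

theorem SameComponent.symm (h : SameComponent S a b) : SameComponent S b a :=
  fun f hf ↦ (h f hf).symm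

theorem SameComponent.mono (hST : S ⊆ T) (h : SameComponent S a b) : SameComponent T a b :=
  fun f hf ↦ h f fun c hc d hd ↦ hf c (hST hc) d (hST hd)

theorem sameComponent_of_le (ha : a ∈ S) (hb : b ∈ S) (hab : a ≤ b) : SameComponent S a b :=
  fun _ hf ↦ hf a ha b hb hab

end SameComponent

/-- The squares outside `A` with an edge in `C`. -/
def outerSquares (A C : Set Cell) : Set Cell :=
  {d | d.IsSquare ∧ d ∉ A ∧ ∃ e ∈ C, e.IsEdge ∧ e ≤ d}

/-- The vertices outside `C` of the edges in `C`. -/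
def innerVertices (C : Set Cell) : Set Cell :=
  {v | v.IsVertex ∧ v ∉ C ∧ ∃ e ∈ C, e.IsEdge ∧ v ≤ e}

/-- `C` is a component of the difference of the subcomplexes `A` and `K`, it touches exactly one
component of the complement of `A ∪ K` along edges, and it touches exactly one component of `A ∩ K`.
This is the combinatorial form of a regular component of `FP`. -/
structure RegularCells (A K C : Set Cell) : Prop where
  isLowerSet_left : IsLowerSet A
  isLowerSet_right : IsLowerSet K
  subset : C ⊆ A \ K
  mem_of_compRel : ∀ a ∈ C, ∀ b ∈ A \ K, a ≤ b ∨ b ≤ a → b ∈ C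
  sameComponent : ∀ a ∈ C, ∀ b ∈ C, SameComponent C a b
  outerSquares_nonempty : (outerSquares A C).Nonempty
  outerSquares_sameComponent : ∀ d ∈ outerSquares A C, ∀ d' ∈ outerSquares A C,
    SameComponent (Aᶜ ∩ Kᶜ) d d'
  exists_face : ∃ a ∈ C, ∃ b ∈ A \ C, b ≤ a
  innerVertices_sameComponent : ∀ v ∈ innerVertices C, ∀ v' ∈ innerVertices C,
    SameComponent (A ∩ K) v v'

namespace RegularCells

variable {A K C : Set Cell} {a b : Cell}

theorem mem_of_ge (h : RegularCells A K C) (ha : a ∈ C) (hb : b ∈ A) (hab : a ≤ b) : b ∈ C :=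
  h.mem_of_compRel a ha b ⟨hb, fun hbK ↦ (h.subset ha).2 (h.isLowerSet_right hab hbK)⟩ (.inl hab)

theorem mem_inter_of_le (h : RegularCells A K C) (ha : a ∈ C) (hb : b ∉ C) (hba : b ≤ a) :
    b ∈ A ∩ K := by
  have hbA := h.isLowerSet_left hba (h.subset ha).1
  exact ⟨hbA, by_contra fun hbK ↦ hb (h.mem_of_compRel a ha b ⟨hbA, hbK⟩ (.inr hba))⟩

theorem isLowerSet_diff (h : RegularCells A K C) : IsLowerSet (A \ C) :=
  fun _ _ hba ha ↦ ⟨h.isLowerSet_left hba ha.1, fun hb ↦ ha.2 (h.mem_of_ge hb ha.1 hba)⟩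

end RegularCells

/-- `R` is a union of pairs of a square and an edge of `C` that can be removed one after the other,
starting from the complement of `A`. -/
inductive Erosion (A C : Set Cell) : Set Cell → Prop
  | empty : Erosion A C ∅
  | grow {R : Set Cell} {s t e : Cell} (hR : Erosion A C R) (hst : AreSides s t e) (hs : s ∈ C)
      (he : e ∈ C) (hsR : s ∉ R) (ht : t ∈ R ∨ t ∉ A) : Erosion A C (R ∪ {e, s})

namespace Erosion

variable {A K C R : Set Cell} {v : Cell}

theorem subset (hR : Erosion A C R) : R ⊆ C := by
  induction hR with
  | empty => exact empty_subset C
  | grow _ _ hs he _ _ ih => exact union_subset ih (insert_subset he (singleton_subset_iff.2 hs))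

theorem isLowerSet_diff (hA : IsLowerSet A) (hR : Erosion A C R) : IsLowerSet (A \ R) := by
  induction hR with
  | empty => rwa [sdiff_empty]
  | grow _ hst _ _ _ ht ih =>
    rintro a b hba ⟨haA, haR⟩
    refine ⟨hA hba haA, ?_⟩
    rintro (hb | rfl | rfl)
    · exact (ih hba ⟨haA, fun ha ↦ haR (.inl ha)⟩).2 hb
    · rcases hst.eq_or hba with rfl | rfl | rfl
      · exact haR (.inr (.inl rfl))
      · exact haR (.inr (.inr rfl))
      · exact ht.elim (fun h ↦ haR (.inl h)) (· haA)
    · rw [hst.left.eq_of_le hba] at haR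
      exact haR (.inr (.inr rfl))

theorem collapses (hA : IsLowerSet A) (hCA : C ⊆ A) (hR : Erosion A C R) :
    Collapses A (A \ R) := by
  induction hR with
  | empty => rw [sdiff_empty]
  | @grow R s t e hR hst hs he hsR ht ih =>
    refine ih.tail ⟨hR.isLowerSet_diff hA, (hR.grow hst hs he hsR ht).isLowerSet_diff hA, e, s,
      ⟨hCA hs, hsR⟩, hst.le_left.lt_of_ne ?_, ?_, sdiff_sdiff.symm⟩
    all_goals
      obtain ⟨hs, -, -, hes, -, he⟩ := hst
      simp only [Cell.IsEdge, Cell.IsSquare, le_def, ne_eq, Cell.ext_iff] at *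
      omega

theorem not_isVertex (hR : Erosion A C R) (hv : v ∈ R) : ¬v.IsVertex := by
  induction hR with
  | empty => exact hv.elim
  | grow _ hst _ _ _ _ ih =>
    rcases hv with hv | rfl | rfl
    · exact ih hv
    · have := hst.isEdge
      simp only [Cell.IsEdge, IsVertex] at *
      omega
    · have := hst.left
      simp only [Cell.IsSquare, IsVertex] at *
      omega

theorem exists_outerSquare {c : Cell → Prop} (hR : Erosion A C R)
    (hc : ∀ e ∈ R, e.IsEdge → SidesAgree c e) :
    ∀ s ∈ R, s.IsSquare → ∃ d ∈ outerSquares A C, c s ↔ c d := by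
  induction hR with
  | empty => exact fun s hs ↦ hs.elim
  | @grow R s t e _ hst hs he hsR ht ih =>
    specialize ih fun e he ↦ hc e (.inl he)
    rintro s' (hs' | rfl | rfl) hsq
    · exact ih s' hs' hsq
    · have := hst.isEdge
      simp only [Cell.IsEdge, Cell.IsSquare] at *
      omega
    · rw [hst.sidesAgree_iff.1 (hc e (.inr (.inl rfl)) hst.isEdge)]
      rcases ht with ht | ht
      · exact ih t ht hst.right
      · exact ⟨t, ⟨hst.right, ht, e, he, hst.isEdge, hst.le_right⟩, Iff.rfl⟩

theorem endsAgree {f : Cell → Prop} (hA : IsLowerSet A) (hCA : C ⊆ A) (hR : Erosion A C R)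
    (hf : ∀ e ∈ A \ R, e.IsEdge → EndsAgree f e) : ∀ e ∈ A, e.IsEdge → EndsAgree f e := by
  induction hR with
  | empty => simpa using hf
  | @grow R s t e hR hst hs he hsR _ ih =>
    have other (e') (he' : e' ∈ A \ R) (hedge : e'.IsEdge) (hne : e' ≠ e) : EndsAgree f e' := by
      refine hf e' ⟨he'.1, ?_⟩ hedge
      rintro (h | rfl | rfl)
      · exact he'.2 h
      · exact hne rfl
      · have := hst.left
        simp only [Cell.IsEdge, Cell.IsSquare] at *
        omega
    refine ih fun e' he' hedge ↦ ?_
    rcases eq_or_ne e' e with rfl | hne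
    · exact hst.left.endsAgree_of_other_edges hedge hst.le_left fun e'' hle ↦
        other e'' (hR.isLowerSet_diff hA hle ⟨hCA hs, hsR⟩)
    · exact other e' he' hedge hne

/-- A maximal erosion propagates from an outer square through all edges of `C`. -/
theorem mem_of_maximal (h : RegularCells A K C) (hR : Maximal (Erosion A C) R) {s : Cell}
    (hs : s ∈ C) (hsq : s.IsSquare) : s ∈ R := by
  have no_step {s t e : Cell} (hst : AreSides s t e) (he : e ∈ C) (hs : s ∈ A \ R) : t ∈ A \ R := by
    by_contra ht
    have hsC := h.mem_of_ge he hs.1 hst.le_left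
    have ht' : t ∈ R ∨ t ∉ A := by tauto
    exact hs.2 (hR.2 (hR.1.grow hst hsC he hs.2 ht') subset_union_left (.inr (.inr rfl)))
  have agree (a) (ha : a ∈ C) : SidesAgree (· ∈ A \ R) a := by
    refine sidesAgree_of_edges fun e hae he ↦ ?_
    obtain ⟨s, t, hst⟩ := he.exists_areSides
    rw [hst.sidesAgree_iff]
    by_cases heA : e ∈ A
    · have heC := h.mem_of_ge ha heA hae
      exact ⟨no_step hst heC, no_step hst.symm heC⟩
    · exact iff_of_false (fun hs ↦ heA (h.isLowerSet_left hst.le_left hs.1))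
        fun ht ↦ heA (h.isLowerSet_left hst.le_right ht.1)
  obtain ⟨d, hd, hdA, e, he, -, hed⟩ := h.outerSquares_nonempty
  by_contra hsR
  exact hdA (((h.sameComponent s hs e he).square_iff hs he agree hsq hd le_rfl hed).1
    ⟨(h.subset hs).1, hsR⟩).1

end Erosion

/-- `W` is a union of pairs of an edge and a vertex of `C \ R` that can be attached to `A \ C` one
after the other, each edge being attached along its other endpoint. -/
inductive Growth (C R : Set Cell) : Set Cell → Prop
  | empty : Growth C R ∅
  | grow {W : Set Cell} {u v e : Cell} (hW : Growth C R W) (huv : AreEnds u v e) (he : e ∈ C \ R)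
      (hu : u ∈ W ∨ u ∉ C) (hv : v ∈ C) (hvW : v ∉ W) : Growth C R (W ∪ {v, e})

namespace Growth

variable {A K C R W : Set Cell}

theorem subset (hW : Growth C R W) : W ⊆ C := by
  induction hW with
  | empty => exact empty_subset C
  | grow _ _ he _ hv _ ih => exact union_subset ih (insert_subset hv (singleton_subset_iff.2 he.1))

theorem disjoint (hR : Erosion A C R) (hW : Growth C R W) : Disjoint W R := by
  induction hW with
  | empty => exact empty_disjoint R
  | grow _ huv he _ _ _ ih =>
    rw [disjoint_union_left, disjoint_insert_left, disjoint_singleton_left]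
    exact ⟨ih, fun hv ↦ hR.not_isVertex hv huv.right, he.2⟩

theorem isLowerSet_union (h : RegularCells A K C) (hW : Growth C R W) :
    IsLowerSet (A \ C ∪ W) := by
  induction hW with
  | empty => rw [union_empty]; exact h.isLowerSet_diff
  | grow _ huv he hu _ _ ih =>
    rw [← union_assoc]
    rintro a b hba (ha | rfl | rfl)
    · exact .inl (ih hba ha)
    · exact .inr (.inl (huv.right.eq_of_le hba))
    · rcases huv.eq_or hba with rfl | rfl | rfl
      · exact .inr (.inr rfl)
      · exact .inl (hu.symm.imp_left fun hb ↦ ⟨h.isLowerSet_left hba (h.subset he.1).1, hb⟩)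
      · exact .inr (.inl rfl)

theorem notMem_of_right_notMem (h : RegularCells A K C) (hW : Growth C R W) {u v e : Cell}
    (huv : AreEnds u v e) (hv : v ∈ C) (hvW : v ∉ W) : e ∉ W := fun he ↦
  (hW.isLowerSet_union h huv.right_le (.inr he)).elim (·.2 hv) hvW

theorem collapses (h : RegularCells A K C) (hW : Growth C R W) : Collapses (A \ C ∪ W) (A \ C) := by
  induction hW with
  | empty => rw [union_empty]
  | @grow W u v e hW huv he hu hv hvW ih =>
    refine .head ⟨(hW.grow huv he hu hv hvW).isLowerSet_union h, hW.isLowerSet_union h, v, e,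
      .inr (.inr (.inr rfl)), huv.right_le.lt_of_ne ?_, ?_, ?_⟩ ih
    · rintro rfl
      exact huv.ne (huv.right.eq_of_le huv.left_le)
    · obtain ⟨-, hv, -, -, hve, he⟩ := huv
      simp only [Cell.IsEdge, IsVertex, le_def] at *
      omega
    · have heW := hW.notMem_of_right_notMem h huv hv hvW
      have hdisj : Disjoint (A \ C ∪ W) {v, e} := by
        simp only [disjoint_insert_right, disjoint_singleton_right, mem_union, mem_sdiff]
        exact ⟨by tauto, by have := he.1; tauto⟩
      rw [← union_assoc, union_sdiff_right, hdisj.sdiff_eq_left]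

theorem isLowerSet_union_inter (h : RegularCells A K C) (hW : Growth C R W) :
    IsLowerSet (W ∪ A ∩ K) := by
  rintro a b hba (ha | ha)
  · by_cases hb : b ∈ C
    · exact .inl ((hW.isLowerSet_union h hba (.inr ha)).resolve_left (·.2 hb))
    · exact .inr (h.mem_inter_of_le (hW.subset ha) hb hba)
  · exact .inr (h.isLowerSet_left.inter h.isLowerSet_right hba ha)

theorem exists_innerVertex (h : RegularCells A K C) (hW : Growth C R W) :
    ∀ v ∈ W, v.IsVertex → ∃ u ∈ innerVertices C, SameComponent (W ∪ A ∩ K) u v := by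
  induction hW with
  | empty => exact fun v hv ↦ hv.elim
  | @grow W u v e _ huv he hu hv hvW ih =>
    have hmono : W ∪ A ∩ K ⊆ W ∪ {v, e} ∪ A ∩ K := union_subset_union_left _ subset_union_left
    rintro v' (hv' | rfl | rfl) hvert
    · obtain ⟨w, hw, hwv⟩ := ih v' hv' hvert
      exact ⟨w, hw, hwv.mono hmono⟩
    · have huv' (huM : u ∈ W ∪ A ∩ K) : SameComponent (W ∪ {v', e} ∪ A ∩ K) u v' :=
        (sameComponent_of_le (hmono huM) (.inl (.inr (.inr rfl))) huv.left_le).trans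
          (sameComponent_of_le (.inl (.inr (.inl rfl))) (.inl (.inr (.inr rfl))) huv.right_le).symm
      rcases hu with hu | hu
      · obtain ⟨w, hw, hwu⟩ := ih u hu huv.left
        exact ⟨w, hw, (hwu.mono hmono).trans (huv' (.inl hu))⟩
      · exact ⟨u, ⟨huv.left, hu, e, he.1, huv.isEdge, huv.left_le⟩,
          huv' (.inr (h.mem_inter_of_le he.1 hu huv.left_le))⟩
    · have := huv.isEdge
      simp only [Cell.IsEdge, IsVertex] at *
      omega

/-- A maximal growth propagates from a face of `C` outside `C` through all edges of `C \ R`, and the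
edges in `R` do not separate the vertices of `C`. -/
theorem mem_of_maximal (h : RegularCells A K C) (hR : Erosion A C R)
    (hW : Maximal (Growth C R) W) {v : Cell} (hv : v ∈ C) (hvert : v.IsVertex) : v ∈ W := by
  have no_step {u v e : Cell} (huv : AreEnds u v e) (he : e ∈ C \ R) (hv : v ∈ C \ W) :
      u ∈ C \ W := by
    by_contra hu
    have hu' : u ∈ W ∨ u ∉ C := by tauto
    exact hv.2 (hW.2 (hW.1.grow huv he hu' hv.1 hv.2) subset_union_left (.inr (.inl rfl)))
  have agree (e) (heA : e ∈ A) (he : e.IsEdge) : EndsAgree (· ∈ C \ W) e := by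
    refine hR.endsAgree h.isLowerSet_left (fun a ha ↦ (h.subset ha).1) (fun e he hedge ↦ ?_)
      e heA he
    obtain ⟨u, v, huv⟩ := hedge.exists_areEnds
    rw [huv.endsAgree_iff]
    by_cases heC : e ∈ C
    · exact ⟨no_step huv.symm ⟨heC, he.2⟩, no_step huv ⟨heC, he.2⟩⟩
    · exact iff_of_false (fun hu ↦ heC (h.mem_of_ge hu.1 he.1 huv.left_le))
        fun hv ↦ heC (h.mem_of_ge hv.1 he.1 huv.right_le)
  obtain ⟨a, ha, b, hb, hba⟩ := h.exists_face
  obtain ⟨u, hu, hub⟩ := b.exists_isVertex_le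
  by_contra hvW
  exact (h.isLowerSet_diff hub hb).2 (((h.sameComponent v hv a ha).vertex_iff hv ha
    (fun c hc ↦ endsAgree_of_edges fun e hec ↦ agree e (h.isLowerSet_left hec (h.subset hc).1))
    hvert hu le_rfl (hub.trans hba)).1 ⟨hv, hvW⟩).1

end Growth

namespace RegularCells

variable {A K C R W : Set Cell} {e : Cell}

theorem sameComponent_of_areEnds (h : RegularCells A K C) (hR : Erosion A C R)
    (hW : Maximal (Growth C R) W) {u v : Cell} (huv : AreEnds u v e) (he : e ∈ C) :
    SameComponent (W ∪ A ∩ K) u v := by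
  have inner {w : Cell} (hw : w.IsVertex) (hwe : w ≤ e) :
      ∃ w' ∈ innerVertices C, SameComponent (W ∪ A ∩ K) w' w := by
    by_cases hwC : w ∈ C
    · exact hW.1.exists_innerVertex h w (Growth.mem_of_maximal h hR hW hwC hw) hw
    · exact ⟨w, ⟨hw, hwC, e, he, huv.isEdge, hwe⟩, fun _ _ ↦ Iff.rfl⟩
  obtain ⟨u', hu', huu⟩ := inner huv.left huv.left_le
  obtain ⟨v', hv', hvv⟩ := inner huv.right huv.right_le
  exact huu.symm.trans
    (((h.innerVertices_sameComponent u' hu' v' hv').mono subset_union_right).trans hvv)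

theorem outerSquares_iff (h : RegularCells A K C) {c : Cell → Prop}
    (hc : ∀ e ∉ A, e.IsEdge → SidesAgree c e) {d d' : Cell} (hd : d ∈ outerSquares A C)
    (hd' : d' ∈ outerSquares A C) : c d ↔ c d' := by
  have outside {d : Cell} (hd : d ∈ outerSquares A C) : d ∈ Aᶜ ∩ Kᶜ := by
    obtain ⟨-, hdA, e, he, -, hed⟩ := hd
    exact ⟨hdA, fun hdK ↦ (h.subset he).2 (h.isLowerSet_right hed hdK)⟩
  refine (h.outerSquares_sameComponent d hd d' hd').square_iff (outside hd) (outside hd')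
    (fun a ha ↦ sidesAgree_of_edges fun e hae ↦ hc e fun he ↦ ha.1 (h.isLowerSet_left hae he))
    hd.1 hd'.1 le_rfl le_rfl

/-- Otherwise `e` would close up a cycle in `W ∪ A ∩ K` that separates two outer squares. -/
theorem mem_growth_of_isEdge (h : RegularCells A K C) (hR : Maximal (Erosion A C) R)
    (hW : Maximal (Growth C R) W) (he : e ∈ C \ R) (hedge : e.IsEdge) : e ∈ W := by
  by_contra heW
  obtain ⟨u, v, huv⟩ := hedge.exists_areEnds
  have mem {w : Cell} (hw : w.IsVertex) (hwe : w ≤ e) : w ∈ W ∪ A ∩ K := by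
    by_cases hwC : w ∈ C
    · exact .inl (Growth.mem_of_maximal h hR.1 hW hwC hw)
    · exact .inr (h.mem_inter_of_le he.1 hwC hwe)
  have notMem {e' : Cell} (he' : e' ∉ W) (he'' : e' ∈ C ∨ e' ∉ A) : e' ∉ W ∪ A ∩ K := by
    rintro (h' | h')
    · exact he' h'
    · exact he''.elim (fun h'' ↦ (h.subset h'').2 h'.2) fun h'' ↦ h'' h'.1
  obtain ⟨c, hc, hce⟩ := exists_separating_colouring (hW.1.isLowerSet_union_inter h) huv
    (notMem heW (.inl he.1)) (mem huv.left huv.left_le) (mem huv.right huv.right_le)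
    (h.sameComponent_of_areEnds hR.1 hW huv he.1)
  have agree_eroded (e') (he' : e' ∈ R) (hedge' : e'.IsEdge) : SidesAgree c e' :=
    hc e' hedge' (notMem (fun h ↦ (hW.1.disjoint hR.1).ne_of_mem h he' rfl)
      (.inl (hR.1.subset he'))) (fun h ↦ he.2 (h ▸ he'))
  have agree_outside (e') (he' : e' ∉ A) (hedge' : e'.IsEdge) : SidesAgree c e' :=
    hc e' hedge' (notMem (fun h' ↦ he' (h.subset (hW.1.subset h')).1) (.inr he'))
      (by rintro rfl; exact he' (h.subset he.1).1)
  have outer {s : Cell} (hs : s.IsSquare) (hes : e ≤ s) : ∃ d ∈ outerSquares A C, c s ↔ c d := by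
    by_cases hsA : s ∈ A
    · exact hR.1.exists_outerSquare agree_eroded s
        (Erosion.mem_of_maximal h hR (h.mem_of_ge he.1 hsA hes) hs) hs
    · exact ⟨s, ⟨hs, hsA, e, he.1, hedge, hes⟩, Iff.rfl⟩
  refine hce fun s t hs ht hes het ↦ ?_
  obtain ⟨d, hd, hsd⟩ := outer hs hes
  obtain ⟨d', hd', htd'⟩ := outer ht het
  rw [hsd, htd', h.outerSquares_iff agree_outside hd hd']

theorem collapses (h : RegularCells A K C) (hC : C.Finite) : Collapses A (A \ C) := by
  obtain ⟨R, hR⟩ := (hC.finite_subsets.subset fun R hR ↦ Erosion.subset (A := A) hR).exists_maximal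
    ⟨∅, .empty⟩
  obtain ⟨W, hW⟩ := (hC.finite_subsets.subset fun W hW ↦ Growth.subset (R := R) hW).exists_maximal
    ⟨∅, .empty⟩
  have key : A \ R = A \ C ∪ W := by
    ext a
    have hRC : a ∈ R → a ∈ C := fun ha ↦ hR.1.subset ha
    have hWC : a ∈ W → a ∈ C := fun ha ↦ hW.1.subset ha
    have hCA : a ∈ C → a ∈ A := fun ha ↦ (h.subset ha).1
    have hdisj : a ∈ W → a ∉ R := fun haW haR ↦ (hW.1.disjoint hR.1).ne_of_mem haW haR rfl
    have hmem : a ∈ C → a ∉ R → a ∈ W := fun haC haR ↦ by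
      rcases a.trichotomy with ha | ha | ha
      · exact Growth.mem_of_maximal h hR.1 hW haC ha
      · exact h.mem_growth_of_isEdge hR hW ⟨haC, haR⟩ ha
      · exact absurd (Erosion.mem_of_maximal h hR haC ha) haR
    simp only [mem_union, mem_sdiff] at *
    tauto
  exact (hR.1.collapses h.isLowerSet_left fun a ha ↦ (h.subset ha).1).trans
    (key ▸ hW.1.collapses h)

end RegularCells

/-- A subcomplex that is a union of closed squares. -/
structure IsPureComplex (S : Set Cell) : Prop where
  isLowerSet : IsLowerSet S
  exists_square : ∀ a ∈ S, ∃ s ∈ S, s.IsSquare ∧ a ≤ s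

/-- The boundaries of `A` and `K` do not run along a common grid line. -/
structure Transverse (A K : Set Cell) : Prop where
  rows : ∀ n, n % 2 = 0 →
    (∀ m, ⟨m, n - 1⟩ ∈ A ↔ ⟨m, n + 1⟩ ∈ A) ∨ ∀ m, ⟨m, n - 1⟩ ∈ K ↔ ⟨m, n + 1⟩ ∈ K
  columns : ∀ m, m % 2 = 0 →
    (∀ n, ⟨m - 1, n⟩ ∈ A ↔ ⟨m + 1, n⟩ ∈ A) ∨ ∀ n, ⟨m - 1, n⟩ ∈ K ↔ ⟨m + 1, n⟩ ∈ K

/-- The reflection of cells in the diagonal. -/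
def Cell.swap (a : Cell) : Cell := ⟨a.y, a.x⟩

theorem IsPureComplex.swap {S : Set Cell} (hS : IsPureComplex S) :
    IsPureComplex (Cell.swap ⁻¹' S) where
  isLowerSet _ _ hba ha := hS.isLowerSet ⟨hba.2, hba.1⟩ ha
  exists_square a ha := by
    obtain ⟨s, hs, hsq, has⟩ := hS.exists_square a.swap ha
    exact ⟨s.swap, hs, ⟨hsq.2, hsq.1⟩, ⟨has.2, has.1⟩⟩

namespace Transverse

variable {A K : Set Cell} {v e : Cell}

theorem swap (h : Transverse A K) : Transverse (Cell.swap ⁻¹' A) (Cell.swap ⁻¹' K) :=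
  ⟨h.columns, h.rows⟩

theorem exists_edge_of_row (h : Transverse A K) (hA : IsPureComplex A) (hK : IsPureComplex K)
    (hv : v.IsVertex) (he : e.IsEdge) (hve : v ≤ e) (hrow : e.y = v.y) (heA : e ∈ A) (heK : e ∉ K)
    (hvK : v ∈ K) : ∃ g ∈ A ∩ K, g.IsEdge ∧ v ≤ g ∧ ∃ s ∈ A, e ≤ s ∧ g ≤ s := by
  obtain ⟨s, hsA, hs, hes⟩ := hA.exists_square e heA
  obtain ⟨k, hkK, hk, hvk⟩ := hK.exists_square v hvK
  have hek : ¬e ≤ k := fun hek ↦ heK (hK.isLowerSet hek hkK)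
  obtain ⟨n, hn, hsn, hkn⟩ : ∃ n, (n = v.y - 1 ∨ n = v.y + 1) ∧ ⟨e.x, n⟩ ∈ A ∧ ⟨k.x, n⟩ ∈ K := by
    have hky : k.y = v.y - 1 ∨ k.y = v.y + 1 := by
      simp only [le_def, IsVertex, Cell.IsSquare] at *; omega
    have hsx : s.x = e.x ∧ (s.y = v.y - 1 ∨ s.y = v.y + 1) := by
      simp only [le_def, IsVertex, Cell.IsEdge, Cell.IsSquare] at *; omega
    have hs' : ⟨e.x, s.y⟩ ∈ A := hsx.1 ▸ hsA
    rcases h.rows v.y hv.2 with hr | hr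
    · refine ⟨k.y, hky, ?_, hkK⟩
      specialize hr e.x
      rcases hky with hky | hky <;> rcases hsx.2 with hsy | hsy <;> rw [hky] <;> rw [hsy] at hs' <;>
        tauto
    · refine ⟨s.y, hsx.2, hs', ?_⟩
      specialize hr k.x
      have hk' : ⟨k.x, k.y⟩ ∈ K := hkK
      rcases hky with hky | hky <;> rcases hsx.2 with hsy | hsy <;> rw [hsy] <;> rw [hky] at hk' <;>
        tauto
  refine ⟨⟨v.x, n⟩, ⟨hA.isLowerSet ?_ hsn, hK.isLowerSet ?_ hkn⟩, ?_, ?_, ⟨e.x, n⟩, hsn, ?_, ?_⟩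
  all_goals simp only [le_def, IsVertex, Cell.IsEdge, Cell.IsSquare] at *; omega

theorem exists_edge (h : Transverse A K) (hA : IsPureComplex A) (hK : IsPureComplex K)
    (hv : v.IsVertex) (he : e.IsEdge) (hve : v ≤ e) (heA : e ∈ A) (heK : e ∉ K) (hvK : v ∈ K) :
    ∃ g ∈ A ∩ K, g.IsEdge ∧ v ≤ g ∧ ∃ s ∈ A, e ≤ s ∧ g ≤ s := by
  have : e.y = v.y ∨ e.x = v.x := by simp only [le_def, IsVertex, Cell.IsEdge] at *; omega
  rcases this with hrow | hcol
  · exact h.exists_edge_of_row hA hK hv he hve hrow heA heK hvK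
  · obtain ⟨g, hg, hge, hvg, s, hs, hes, hgs⟩ := h.swap.exists_edge_of_row (v := v.swap)
      (e := e.swap) hA.swap hK.swap ⟨hv.2, hv.1⟩ (by rw [Cell.IsEdge, add_comm]; exact he)
      ⟨hve.2, hve.1⟩ hcol heA heK hvK
    exact ⟨g.swap, hg, by rw [Cell.IsEdge, add_comm]; exact hge, ⟨hvg.2, hvg.1⟩, s.swap, hs,
      ⟨hes.2, hes.1⟩, ⟨hgs.2, hgs.1⟩⟩

end Transverse

/-! ### Regions of a grid -/

/-- The positions of the lines of a grid in the plane, the same in both directions. -/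
structure Grid where
  line : ℤ → ℝ
  strictMono : StrictMono line
  exists_mem_Ico : ∀ x, ∃ k, x ∈ Ico (line k) (line (k + 1))

namespace Grid

open Topology

variable (Γ : Grid)

/-- The index of the one-dimensional cell containing `x`: `2 * k` if `x` is the position of line
`k`, and `2 * k + 1` if `x` lies strictly between the lines `k` and `k + 1`. -/
def index (x : ℝ) : ℤ :=
  open Classical in
  let k := (Γ.exists_mem_Ico x).choose
  if Γ.line k = x then 2 * k else 2 * k + 1

variable {Γ} {x y : ℝ} {k m n : ℤ}

theorem two_mul_le_index : 2 * k ≤ Γ.index x ↔ Γ.line k ≤ x := by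
  obtain ⟨hle, hlt⟩ := (Γ.exists_mem_Ico x).choose_spec
  set l := (Γ.exists_mem_Ico x).choose with hl
  have hkl : Γ.line k ≤ x ↔ k ≤ l :=
    ⟨fun h ↦ Int.le_of_lt_add_one (Γ.strictMono.lt_iff_lt.1 (h.trans_lt hlt)),
      fun h ↦ (Γ.strictMono.monotone h).trans hle⟩
  rw [hkl, index, ← hl]
  split_ifs <;> omega

theorem index_le_two_mul : Γ.index x ≤ 2 * k ↔ x ≤ Γ.line k := by
  obtain ⟨hle, hlt⟩ := (Γ.exists_mem_Ico x).choose_spec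
  set l := (Γ.exists_mem_Ico x).choose with hl
  rw [index, ← hl]
  split_ifs with h
  · rw [← h, Γ.strictMono.le_iff_le]
    omega
  · have hkl : x ≤ Γ.line k ↔ l < k :=
      ⟨fun h' ↦ Γ.strictMono.lt_iff_lt.1 ((lt_of_le_of_ne hle h).trans_le h'),
        fun h' ↦ hlt.le.trans (Γ.strictMono.monotone h')⟩
    rw [hkl]
    omega

theorem index_eq_two_mul : Γ.index x = 2 * k ↔ x = Γ.line k := by
  rw [le_antisymm_iff, le_antisymm_iff, index_le_two_mul, two_mul_le_index]

theorem index_eq_two_mul_add_one : Γ.index x = 2 * k + 1 ↔ x ∈ Ioo (Γ.line k) (Γ.line (k + 1)) := by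
  rw [mem_Ioo, ← not_le, ← not_le, ← index_le_two_mul, ← two_mul_le_index]
  omega

theorem monotone_index : Monotone Γ.index := by
  intro x y hxy
  have down : 2 * (Γ.index x / 2) ≤ Γ.index y :=
    two_mul_le_index.2 ((two_mul_le_index.1 (by omega)).trans hxy)
  have up : Γ.index x ≤ 2 * ((Γ.index y + 1) / 2) :=
    index_le_two_mul.2 (hxy.trans (index_le_two_mul.1 (by omega)))
  omega

theorem intFace_index_left : IntFace (Γ.index x) n ↔
    x ∈ Icc (Γ.line (n / 2)) (Γ.line ((n + 1) / 2)) := by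
  rw [mem_Icc, ← index_le_two_mul, ← two_mul_le_index]
  omega

theorem intFace_index_right : IntFace m (Γ.index x) ↔
    x ∈ Ioo (Γ.line ((m - 1) / 2)) (Γ.line ((m + 2) / 2)) := by
  rw [mem_Ioo, ← not_le, ← not_le, ← index_le_two_mul, ← two_mul_le_index]
  omega

theorem eventually_intFace (x : ℝ) : ∀ᶠ y in 𝓝 x, IntFace (Γ.index x) (Γ.index y) := by
  simp only [intFace_index_right]
  exact isOpen_Ioo.mem_nhds (intFace_index_right.1 (by omega))

theorem closure_index_preimage (n : ℤ) :
    closure (Γ.index ⁻¹' {n}) = {x | IntFace (Γ.index x) n} := by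
  simp only [intFace_index_left]
  rcases Int.even_or_odd' n with ⟨k, rfl | rfl⟩
  · have : Γ.index ⁻¹' {2 * k} = {Γ.line k} := by ext; exact index_eq_two_mul
    rw [this, closure_singleton, show (2 * k + 1) / 2 = 2 * k / 2 by omega,
      show 2 * k / 2 = k by omega]
    exact Icc_self _ |>.symm
  · have : Γ.index ⁻¹' {2 * k + 1} = Ioo (Γ.line k) (Γ.line (k + 1)) := by
      ext; exact index_eq_two_mul_add_one
    rw [this, closure_Ioo (Γ.strictMono (lt_add_one k)).ne, show (2 * k + 1) / 2 = k by omega,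
      show (2 * k + 1 + 1) / 2 = k + 1 by omega]
    rfl

theorem index_preimage_nonempty (n : ℤ) : (Γ.index ⁻¹' {n}).Nonempty := by
  rw [← closure_nonempty_iff, closure_index_preimage]
  exact ⟨Γ.line (n / 2), intFace_index_left.2
    (left_mem_Icc.2 (Γ.strictMono.monotone (by omega)))⟩

theorem infinite_index_preimage (hn : n % 2 = 1) : (Γ.index ⁻¹' {n}).Infinite := by
  have : Γ.index ⁻¹' {n} = Ioo (Γ.line (n / 2)) (Γ.line (n / 2 + 1)) := by
    ext; rw [← index_eq_two_mul_add_one, mem_preimage, mem_singleton_iff]; omega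
  rw [this]
  exact Ioo_infinite (Γ.strictMono (lt_add_one _))

variable (Γ) in
/-- The cell containing the point `p`. -/
def cellOf (p : Plane) : Cell := ⟨Γ.index (p 0), Γ.index (p 1)⟩

variable (Γ) in
/-- The union of the relatively open cells in `S`. -/
def region (S : Set Cell) : Set Plane := Γ.cellOf ⁻¹' S

variable {S S' : Set Cell} {a b c : Cell} {p q : Plane}

theorem region_singleton (b : Cell) :
    Γ.region {b} = univ.pi fun i ↦ Γ.index ⁻¹' {![b.x, b.y] i} := by
  ext p
  simp [region, cellOf, Cell.ext_iff, Fin.forall_fin_two]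

theorem exists_cellOf_eq (b : Cell) : ∃ p, Γ.cellOf p = b := by
  change (Γ.region {b}).Nonempty
  rw [region_singleton, univ_pi_nonempty_iff]
  exact fun i ↦ index_preimage_nonempty _

theorem infinite_region_singleton (hb : ¬b.IsVertex) : (Γ.region {b}).Infinite := by
  have hne : (Γ.region {b}).Nonempty := exists_cellOf_eq b
  rw [region_singleton] at hne ⊢
  have hi : ∃ i, (![b.x, b.y] i) % 2 = 1 := by
    simp only [Fin.exists_fin_two, Matrix.cons_val_zero, Matrix.cons_val_one, IsVertex] at *
    omega
  obtain ⟨i, hi⟩ := hi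
  refine Infinite.of_image (Function.eval i) ?_
  rw [eval_image_univ_pi hne]
  exact infinite_index_preimage hi

theorem isPreconnected_region_singleton (b : Cell) : IsPreconnected (Γ.region {b}) := by
  rw [region_singleton]
  exact isPreconnected_univ_pi fun i ↦
    (ordConnected_singleton.preimage_mono monotone_index).isPreconnected

theorem closure_region_singleton (b : Cell) : closure (Γ.region {b}) = {p | Γ.cellOf p ≤ b} := by
  ext p
  simp [region_singleton, closure_pi_set, closure_index_preimage, Fin.forall_fin_two, le_def,
    cellOf]

theorem eventually_cellOf_le (p : Plane) : ∀ᶠ q in 𝓝 p, Γ.cellOf p ≤ Γ.cellOf q :=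
  (((continuous_apply (0 : Fin 2)).tendsto p).eventually (eventually_intFace (p 0))).and
    (((continuous_apply (1 : Fin 2)).tendsto p).eventually (eventually_intFace (p 1)))

theorem exists_le_of_mem_closure (hp : p ∈ closure (Γ.region S)) : ∃ a ∈ S, Γ.cellOf p ≤ a := by
  obtain ⟨q, hpq, hq⟩ := mem_closure_iff_nhds.1 hp _ (eventually_cellOf_le p)
  exact ⟨Γ.cellOf q, hq, hpq⟩

theorem isClosed_region (hS : IsLowerSet S) : IsClosed (Γ.region S) :=
  isClosed_of_closure_subset fun _ hp ↦
    let ⟨_, ha, hle⟩ := exists_le_of_mem_closure hp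
    hS hle ha

theorem sameComponent_of_isPreconnected {T : Set Plane} (hT : IsPreconnected T)
    (hTS : T ⊆ Γ.region S) (hp : p ∈ T) (hq : q ∈ T) :
    SameComponent S (Γ.cellOf p) (Γ.cellOf q) := by
  intro f hf
  refine hT.induction₂ (fun p q ↦ f (Γ.cellOf p) ↔ f (Γ.cellOf q)) (fun p hp ↦ ?_)
    (fun _ _ _ _ _ _ ↦ Iff.trans) (fun _ _ _ _ ↦ Iff.symm) hp hq
  filter_upwards [nhdsWithin_le_nhds (eventually_cellOf_le (Γ := Γ) p), self_mem_nhdsWithin]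
    with q hle hq
  exact hf _ (hTS hp) _ (hTS hq) hle

theorem mem_component_of_le (hp : p ∈ Γ.region S) (hq : q ∈ Γ.region S)
    (hpq : Γ.cellOf p ≤ Γ.cellOf q) : q ∈ connectedComponentIn (Γ.region S) p := by
  have hsub : Γ.region {Γ.cellOf q} ⊆ Γ.region S := preimage_mono (singleton_subset_iff.2 hq)
  have hclosure : p ∈ closure (Γ.region {Γ.cellOf q}) := by rwa [closure_region_singleton]
  have hconn : IsPreconnected (insert p (Γ.region {Γ.cellOf q})) :=
    (isPreconnected_region_singleton _).subset_closure (subset_insert _ _)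
      (insert_subset hclosure subset_closure)
  exact hconn.subset_connectedComponentIn (mem_insert _ _) (insert_subset hp hsub) (.inr rfl)

theorem mem_component_of_compRel (hp : p ∈ Γ.region S) (hq : q ∈ Γ.region S)
    (hpq : Γ.cellOf p ≤ Γ.cellOf q ∨ Γ.cellOf q ≤ Γ.cellOf p) :
    q ∈ connectedComponentIn (Γ.region S) p := by
  rcases hpq with hpq | hqp
  · exact mem_component_of_le hp hq hpq
  · rw [← connectedComponentIn_eq (mem_component_of_le hq hp hqp)]
    exact mem_connectedComponentIn hq

theorem exists_eq_region_of_isCompOf {C : Set Plane} (hC : IsCompOf C (Γ.region S)) :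
    ∃ C' ⊆ S, C = Γ.region C' ∧ (∀ a ∈ C', ∀ b ∈ S, a ≤ b ∨ b ≤ a → b ∈ C') ∧
      ∀ a ∈ C', ∀ b ∈ C', SameComponent C' a b := by
  obtain ⟨x, -, rfl⟩ := hC
  set C := connectedComponentIn (Γ.region S) x with hC
  have hCS : C ⊆ Γ.region S := connectedComponentIn_subset _ _
  have adjacent {p q} (hp : p ∈ C) (hq : q ∈ Γ.region S)
      (hpq : Γ.cellOf p ≤ Γ.cellOf q ∨ Γ.cellOf q ≤ Γ.cellOf p) : q ∈ C := by
    rw [hC, connectedComponentIn_eq hp]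
    exact mem_component_of_compRel (hCS hp) hq hpq
  have hregion : C = Γ.region (Γ.cellOf '' C) := by
    refine (subset_preimage_image _ _).antisymm ?_
    rintro q ⟨p, hp, hpq⟩
    refine adjacent hp ?_ (.inl hpq.le)
    rw [region, mem_preimage, ← hpq]
    exact hCS hp
  refine ⟨Γ.cellOf '' C, image_subset_iff.2 hCS, hregion, ?_, ?_⟩
  · rintro _ ⟨p, hp, rfl⟩ b hb hpb
    obtain ⟨q, rfl⟩ := Γ.exists_cellOf_eq b
    exact mem_image_of_mem _ (adjacent hp hb hpb)
  · rintro _ ⟨p, hp, rfl⟩ _ ⟨q, hq, rfl⟩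
    exact sameComponent_of_isPreconnected isPreconnected_connectedComponentIn hregion.subset hp hq

theorem sharesEdge_component (hp : p ∈ Γ.region S) {e : Cell} (hb : b ∈ S) (hpb : Γ.cellOf p ≤ b)
    (he : e.IsEdge) (heb : e ≤ b) (hec : e ≤ c) {C : Set Cell} (hc : c ∈ C) :
    SharesEdge (connectedComponentIn (Γ.region S) p) (Γ.region C) := by
  have hbT : Γ.region {b} ⊆ connectedComponentIn (Γ.region S) p := by
    rintro q rfl
    exact mem_component_of_le hp hb hpb
  have hcC : Γ.region {c} ⊆ Γ.region C := preimage_mono (singleton_subset_iff.2 hc)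
  have closure_mem {d : Cell} (hed : e ≤ d) : Γ.region {e} ⊆ closure (Γ.region {d}) := by
    rw [closure_region_singleton]
    rintro q rfl
    exact hed
  have hev : ¬e.IsVertex := by simp only [IsVertex, Cell.IsEdge] at *; omega
  exact (infinite_region_singleton hev).mono (subset_inter
    ((closure_mem heb).trans (closure_mono hbT)) ((closure_mem hec).trans (closure_mono hcC)))

variable {A K : Set Cell}

/-- The box is retracted away from its face on line `m / 2`, opposite to line `(2 * n - m) / 2`. -/
theorem sdr_region_of_free_facet {i j : Fin 2} (hij : i ≠ j) {m n l : ℤ} (hmn : IntFace m n)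
    (hne : m ≠ n) (hS' : IsLowerSet S')
    (hS : Γ.region S =
      Γ.region S' ∪ {p | IntFace (Γ.index (p i)) n ∧ IntFace (Γ.index (p j)) l})
    (hfree : ∀ p, IntFace (Γ.index (p i)) n → IntFace (Γ.index (p j)) l →
      (p ∈ Γ.region S' ↔ Γ.index (p i) = 2 * n - m ∨ Γ.index (p j) ≠ l)) :
    SDR (Γ.region S) (Γ.region S') := by
  have hα : Γ.line ((2 * n - m) / 2) ≠ Γ.line (m / 2) := Γ.strictMono.injective.ne (by omega)
  have hγδ : Γ.line (l / 2) ≤ Γ.line ((l + 1) / 2) := Γ.strictMono.monotone (by omega)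
  have huIcc : uIcc (Γ.line ((2 * n - m) / 2)) (Γ.line (m / 2)) =
      Icc (Γ.line (n / 2)) (Γ.line ((n + 1) / 2)) := by
    obtain hm | hm : m = n - 1 ∨ m = n + 1 := by omega
    · rw [uIcc_of_ge (Γ.strictMono.monotone (by omega)), show m / 2 = n / 2 by omega,
        show (2 * n - m) / 2 = (n + 1) / 2 by omega]
    · rw [uIcc_of_le (Γ.strictMono.monotone (by omega)), show m / 2 = (n + 1) / 2 by omega,
        show (2 * n - m) / 2 = n / 2 by omega]
  have hbox : {p : Plane | IntFace (Γ.index (p i)) n ∧ IntFace (Γ.index (p j)) l} =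
      box i j (Γ.line ((2 * n - m) / 2)) (Γ.line (m / 2)) (Γ.line (l / 2))
        (Γ.line ((l + 1) / 2)) := by
    simp only [box, huIcc, intFace_index_left]
  rw [hS, hbox]
  refine SDR.union_box hij hα hγδ (isClosed_region hS') fun p hp ↦ ?_
  rw [← hbox] at hp
  rw [hfree p hp.1 hp.2, Γ.strictMono.lt_iff_lt, ← index_eq_two_mul, ← index_eq_two_mul,
    ← index_eq_two_mul]
  have := hp.1
  have := hp.2
  omega

theorem sdr_region_of_elementaryCollapse (h : ElementaryCollapse S S') :
    SDR (Γ.region S) (Γ.region S') := by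
  obtain ⟨hS, hS', a, b, hb, hab, hface, rfl⟩ := h
  have hregion : Γ.region S = Γ.region (S \ {a, b}) ∪ {p | Γ.cellOf p ≤ b} := by
    ext p
    refine ⟨fun hp ↦ ?_, fun hp ↦ hp.elim (·.1) fun hpb ↦ hS hpb hb⟩
    by_cases hp' : Γ.cellOf p = a ∨ Γ.cellOf p = b
    · exact .inr (hp'.elim (·.trans_le hab.le) le_of_eq)
    · exact .inl ⟨hp, hp'⟩
  have hfree (p : Plane) (hp : Γ.cellOf p ≤ b) :
      p ∈ Γ.region (S \ {a, b}) ↔ ¬(Γ.cellOf p = a ∨ Γ.cellOf p = b) :=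
    ⟨(·.2), fun hp' ↦ ⟨hS hp hb, hp'⟩⟩
  have hab' := hab.le
  have hne := hab.ne
  simp only [le_def, ne_eq, Cell.ext_iff, cellOf] at hregion hfree hab' hne
  rcases hface with hx | hy
  · refine sdr_region_of_free_facet (i := 1) (j := 0) (by decide) (m := a.y) (n := b.y) (l := b.x)
      hab'.2 (by omega) hS' ?_ fun p hpy hpx ↦ ?_
    · exact hregion.trans (by simp only [and_comm])
    · rw [hfree p ⟨hpx, hpy⟩]
      omega
  · refine sdr_region_of_free_facet (i := 0) (j := 1) (by decide) (m := a.x) (n := b.x) (l := b.y)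
      hab'.1 (by omega) hS' hregion fun p hpx hpy ↦ ?_
    rw [hfree p ⟨hpx, hpy⟩]
    omega

theorem sdr_region_of_collapses (h : Collapses S S') : SDR (Γ.region S) (Γ.region S') := by
  have subset {T T' : Set Cell} (h : Collapses T T') : T' ⊆ T := by
    induction h with
    | refl => exact Subset.rfl
    | tail _ h ih =>
      obtain ⟨-, -, a, b, -, -, -, rfl⟩ := h
      exact sdiff_subset.trans ih
  induction h with
  | refl => exact SDR.refl _
  | tail h hstep ih =>
    exact SDR.trans (preimage_mono (subset h)) (preimage_mono (subset (.single hstep))) ih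
      (sdr_region_of_elementaryCollapse hstep)

/-- The cells `b` and `e` in the assumptions witness that the component of `a` in `S` shares an
edge with `C`. -/
theorem sameComponent_of_existsUnique {C : Set Cell}
    (h : ∃! T, IsCompOf T (Γ.region S) ∧ SharesEdge T (Γ.region C)) {a a' : Cell} (ha : a ∈ S)
    (ha' : a' ∈ S) (hC : ∃ b ∈ S, a ≤ b ∧ ∃ e, e.IsEdge ∧ e ≤ b ∧ ∃ c ∈ C, e ≤ c)
    (hC' : ∃ b ∈ S, a' ≤ b ∧ ∃ e, e.IsEdge ∧ e ≤ b ∧ ∃ c ∈ C, e ≤ c) :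
    SameComponent S a a' := by
  obtain ⟨p, rfl⟩ := Γ.exists_cellOf_eq a
  obtain ⟨q, rfl⟩ := Γ.exists_cellOf_eq a'
  have touches {p} (hp : p ∈ Γ.region S)
      (hC : ∃ b ∈ S, Γ.cellOf p ≤ b ∧ ∃ e, e.IsEdge ∧ e ≤ b ∧ ∃ c ∈ C, e ≤ c) :
      IsCompOf (connectedComponentIn (Γ.region S) p) (Γ.region S) ∧
        SharesEdge (connectedComponentIn (Γ.region S) p) (Γ.region C) := by
    obtain ⟨b, hb, hpb, e, he, heb, c, hc, hec⟩ := hC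
    exact ⟨⟨p, hp, rfl⟩, sharesEdge_component hp hb hpb he heb hec hc⟩
  have hpq := h.unique (touches ha hC) (touches ha' hC')
  refine sameComponent_of_isPreconnected isPreconnected_connectedComponentIn
    (connectedComponentIn_subset _ p) (mem_connectedComponentIn ha) ?_
  rw [hpq]
  exact mem_connectedComponentIn ha'

theorem finite_setOf_cellOf_isVertex (hS : S.Finite) :
    {p | Γ.cellOf p ∈ S ∧ (Γ.cellOf p).IsVertex}.Finite := by
  refine hS.of_injOn (f := Γ.cellOf) (fun p hp ↦ hp.1) fun p hp q _ hpq ↦ ?_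
  have coord_eq {x y : ℝ} (hx : Γ.index x % 2 = 0) (hxy : Γ.index x = Γ.index y) : x = y := by
    have hx' : Γ.index x = 2 * (Γ.index x / 2) := by omega
    rw [index_eq_two_mul.1 hx', index_eq_two_mul.1 (hxy.symm.trans hx')]
  ext i
  fin_cases i
  · exact coord_eq hp.2.1 (congrArg Cell.x hpq)
  · exact coord_eq hp.2.2 (congrArg Cell.y hpq)

variable {C : Set Cell}

theorem outerSquares_nonempty (hA : IsLowerSet A) (hK : IsPureComplex K) (hfin : A.Finite)
    (hCA : C ⊆ A \ K) (hadj : ∀ a ∈ C, ∀ b ∈ A \ K, a ≤ b ∨ b ≤ a → b ∈ C) {T : Set Plane}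
    (hT : T ⊆ Γ.region (Aᶜ ∩ Kᶜ)) (hTC : SharesEdge T (Γ.region C)) :
    (outerSquares A C).Nonempty := by
  obtain ⟨p, ⟨hpT, hpC⟩, hp⟩ :=
    hTC.exists_notMem_finite (finite_setOf_cellOf_isVertex (Γ := Γ) hfin)
  obtain ⟨c, hc, hpc⟩ := exists_le_of_mem_closure hpC
  obtain ⟨d, hd, hpd⟩ := exists_le_of_mem_closure (closure_mono hT hpT)
  have hpA : Γ.cellOf p ∈ A := hA hpc (hCA hc).1
  have hedge : (Γ.cellOf p).IsEdge := by
    refine ((Γ.cellOf p).trichotomy.resolve_left fun h ↦ hp ⟨hpA, h⟩).resolve_right fun h ↦ ?_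
    exact hd.1 (h.eq_of_le hpd ▸ hpA)
  obtain ⟨s, t, hst⟩ := hedge.exists_areSides
  have hds : d = s ∨ d = t := (hst.eq_or hpd).resolve_left fun h ↦ hd.1 (h ▸ hpA)
  have hpK : Γ.cellOf p ∉ K := fun hpK ↦ by
    obtain ⟨k, hkK, hk, hpk⟩ := hK.exists_square _ hpK
    have hcs : c = s ∨ c = t := (hst.eq_or hpc).resolve_left fun h ↦ (hCA hc).2 (h ▸ hpK)
    have hcd : c ≠ d := fun h ↦ hd.1 (h ▸ (hCA hc).1)
    have hkp : k ≠ Γ.cellOf p := fun h ↦ by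
      simp only [h, Cell.IsEdge, Cell.IsSquare] at hk hedge; omega
    have hkcd : k = c ∨ k = d := by
      have := hst.eq_or hpk
      grind
    exact hkcd.elim (fun h ↦ (hCA hc).2 (h ▸ hkK)) fun h ↦ hd.2 (h ▸ hkK)
  have hdsq : d.IsSquare := hds.elim (· ▸ hst.left) (· ▸ hst.right)
  exact ⟨d, hdsq, hd.1, _, hadj c hc _ ⟨hpA, hpK⟩ (.inr hpc), hedge, hpd⟩

theorem exists_regularCells (hA : IsPureComplex A) (hK : IsPureComplex K) (hAK : Transverse A K)
    (hfin : A.Finite) {C : Set Plane} (hC : IsCompOf C (Γ.region (A \ K)))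
    (hTP : ∃! T, IsCompOf T (Γ.region (A ∩ K)) ∧ SharesEdge T C)
    (hTN : ∃! T, IsCompOf T (Γ.region (Aᶜ ∩ Kᶜ)) ∧ SharesEdge T C) :
    ∃ C', C = Γ.region C' ∧ RegularCells A K C' := by
  obtain ⟨C, hCA, rfl, hadj, hconn⟩ := exists_eq_region_of_isCompOf hC
  refine ⟨C, rfl, hA.isLowerSet, hK.isLowerSet, hCA, hadj, hconn, ?_, ?_, ?_, ?_⟩
  · obtain ⟨_, ⟨⟨x, -, rfl⟩, hTC⟩, -⟩ := hTN
    exact outerSquares_nonempty hA.isLowerSet hK hfin hCA hadj (connectedComponentIn_subset _ x) hTC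
  · have outside {d} (hd : d ∈ outerSquares A C) : d ∈ Aᶜ ∩ Kᶜ ∧
        ∃ b ∈ Aᶜ ∩ Kᶜ, d ≤ b ∧ ∃ e, e.IsEdge ∧ e ≤ b ∧ ∃ c ∈ C, e ≤ c := by
      obtain ⟨-, hdA, e, he, hedge, hed⟩ := hd
      have hd : d ∈ Aᶜ ∩ Kᶜ := ⟨hdA, fun hdK ↦ (hCA he).2 (hK.isLowerSet hed hdK)⟩
      exact ⟨hd, d, hd, le_rfl, e, hedge, hed, e, he, le_rfl⟩
    exact fun d hd d' hd' ↦ sameComponent_of_existsUnique hTN (outside hd).1 (outside hd').1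
      (outside hd).2 (outside hd').2
  · obtain ⟨_, ⟨⟨x, -, rfl⟩, hTC⟩, -⟩ := hTP
    obtain ⟨p, hpT, hpC⟩ := hTC.nonempty
    obtain ⟨b, hb, hpb⟩ := exists_le_of_mem_closure
      (closure_mono (connectedComponentIn_subset _ x) hpT)
    obtain ⟨a, ha, hpa⟩ := exists_le_of_mem_closure hpC
    exact ⟨a, ha, _, ⟨hA.isLowerSet hpb hb.1, fun h ↦ (hCA h).2 (hK.isLowerSet hpb hb.2)⟩, hpa⟩
  · have inside {v} (hv : v ∈ innerVertices C) : v ∈ A ∩ K ∧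
        ∃ b ∈ A ∩ K, v ≤ b ∧ ∃ e, e.IsEdge ∧ e ≤ b ∧ ∃ c ∈ C, e ≤ c := by
      obtain ⟨hvert, hvC, e, he, hedge, hve⟩ := hv
      have hvA := hA.isLowerSet hve (hCA he).1
      have hvK : v ∈ K := by_contra fun hvK ↦ hvC (hadj e he v ⟨hvA, hvK⟩ (.inr hve))
      obtain ⟨g, hg, hgedge, hvg, s, hs, hes, hgs⟩ :=
        hAK.exists_edge hA hK hvert hedge hve (hCA he).1 (hCA he).2 hvK
      have hsK : s ∉ K := fun hsK ↦ (hCA he).2 (hK.isLowerSet hes hsK)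
      exact ⟨⟨hvA, hvK⟩, g, hg, hvg, g, hgedge, le_rfl, s, hadj e he s ⟨hs, hsK⟩ (.inl hes), hgs⟩
    exact fun v hv v' hv' ↦ sameComponent_of_existsUnique hTP (inside hv).1 (inside hv').1
      (inside hv).2 (inside hv').2

theorem sdr_region_diff_component (hA : IsPureComplex A) (hK : IsPureComplex K)
    (hAK : Transverse A K) (hfin : A.Finite) {C : Set Plane}
    (hC : IsCompOf C (Γ.region A \ Γ.region K))
    (hTP : ∃! T, IsCompOf T (Γ.region A ∩ Γ.region K) ∧ SharesEdge T C)
    (hTN : ∃! T, IsCompOf T ((Γ.region A)ᶜ ∩ (Γ.region K)ᶜ) ∧ SharesEdge T C) :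
    SDR (Γ.region A) (Γ.region A \ C) := by
  obtain ⟨C, rfl, h⟩ := exists_regularCells hA hK hAK hfin hC hTP hTN
  exact sdr_region_of_collapses (h.collapses (hfin.subset fun a ha ↦ (h.subset ha).1))

end Grid

/-! ### The grid of a thickened binary image -/

theorem exists_mem_Icc_abs_sub_le_iff {a b δ t : ℝ} (hab : a ≤ b) (hδ : 0 ≤ δ) :
    (∃ s ∈ Icc a b, |s - t| ≤ δ) ↔ t ∈ Icc (a - δ) (b + δ) := by
  constructor
  · rintro ⟨s, ⟨has, hsb⟩, hst⟩
    rw [abs_le] at hst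
    exact ⟨by linarith, by linarith⟩
  · rintro ⟨hat, htb⟩
    refine ⟨max a (min t b), ⟨le_max_left _ _, max_le hab (min_le_right _ _)⟩, ?_⟩
    rw [abs_le]
    grind

theorem mem_thick_fg {S : Set (ℕ × ℕ)} {δ : ℝ} (hδ : 0 ≤ δ) {y : Plane} :
    y ∈ thick δ (fg S) ↔ ∃ p ∈ S, y 0 ∈ Icc ((p.1 : ℝ) - 1 - δ) (p.1 + δ) ∧
      y 1 ∈ Icc ((p.2 : ℝ) - 1 - δ) (p.2 + δ) := by
  simp only [← exists_mem_Icc_abs_sub_le_iff (sub_one_lt _).le hδ]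
  constructor
  · rintro ⟨x, hx, hxy⟩
    obtain ⟨p, hp, hx0, hx1⟩ := mem_iUnion₂.1 hx
    exact ⟨p, hp, ⟨x 0, hx0, (norm_le_pi_norm _ 0).trans hxy⟩,
      ⟨x 1, hx1, (norm_le_pi_norm _ 1).trans hxy⟩⟩
  · rintro ⟨p, hp, ⟨s, hs, hsy⟩, t, ht, hty⟩
    refine ⟨![s, t], mem_iUnion₂.2 ⟨p, hp, hs, ht⟩, (pi_norm_le_iff_of_nonneg hδ).2 ?_⟩
    exact Fin.forall_fin_two.2 ⟨hsy, hty⟩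

/-- The increasing enumeration of the numbers `i - 2 * ε`, `i - ε`, `i + ε`, `i + 2 * ε` with `i`
an integer; these four have the indices `4 * i`, …, `4 * i + 3`. -/
def offsetLine (ε : ℝ) (k : ℤ) : ℝ :=
  (k / 4 : ℤ) +
    if k % 4 = 0 then -(2 * ε) else if k % 4 = 1 then -ε else if k % 4 = 2 then ε else 2 * ε

theorem offsetLine_four_mul (ε : ℝ) (i : ℤ) : offsetLine ε (4 * i) = i - 2 * ε := by
  rw [offsetLine, if_pos (by omega), show 4 * i / 4 = i by omega, sub_eq_add_neg]

theorem offsetLine_four_mul_add_one (ε : ℝ) (i : ℤ) : offsetLine ε (4 * i + 1) = i - ε := by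
  rw [offsetLine, if_neg (by omega), if_pos (by omega), show (4 * i + 1) / 4 = i by omega,
    sub_eq_add_neg]

theorem offsetLine_four_mul_add_two (ε : ℝ) (i : ℤ) : offsetLine ε (4 * i + 2) = i + ε := by
  rw [offsetLine, if_neg (by omega), if_neg (by omega), if_pos (by omega),
    show (4 * i + 2) / 4 = i by omega]

theorem offsetLine_four_mul_add_three (ε : ℝ) (i : ℤ) : offsetLine ε (4 * i + 3) = i + 2 * ε := by
  rw [offsetLine, if_neg (by omega), if_neg (by omega), if_neg (by omega),
    show (4 * i + 3) / 4 = i by omega]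

theorem offsetLine_add_four (ε : ℝ) (k : ℤ) : offsetLine ε (k + 4) = offsetLine ε k + 1 := by
  rw [offsetLine, offsetLine, Int.add_emod_right, show (k + 4) / 4 = k / 4 + 1 by omega]
  push_cast
  ring

theorem strictMono_offsetLine {ε : ℝ} (hε0 : 0 < ε) (hε : ε < 1 / 4) :
    StrictMono (offsetLine ε) := by
  refine strictMono_int_of_lt_succ fun k ↦ ?_
  obtain ⟨i, rfl | rfl | rfl | rfl⟩ : ∃ i, k = 4 * i ∨ k = 4 * i + 1 ∨ k = 4 * i + 2 ∨
    k = 4 * i + 3 := ⟨k / 4, by omega⟩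
  all_goals
    simp only [add_assoc, Int.reduceAdd, offsetLine_four_mul, offsetLine_four_mul_add_one,
      offsetLine_four_mul_add_two, offsetLine_four_mul_add_three, offsetLine_add_four]
    linarith

theorem exists_mem_Ico_offsetLine (ε x : ℝ) :
    ∃ k, x ∈ Ico (offsetLine ε k) (offsetLine ε (k + 1)) := by
  let i := ⌊x + 2 * ε⌋
  have hlow : offsetLine ε (4 * i) ≤ x := by
    rw [offsetLine_four_mul]
    linarith [Int.floor_le (x + 2 * ε)]
  have hupp : x < offsetLine ε (4 * i + 1 + 1 + 1 + 1) := by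
    rw [show 4 * i + 1 + 1 + 1 + 1 = 4 * i + 4 by ring, offsetLine_add_four, offsetLine_four_mul]
    linarith [Int.lt_floor_add_one (x + 2 * ε)]
  by_contra! h
  simp only [mem_Ico, not_and, not_lt] at h
  exact hupp.not_ge (h _ (h _ (h _ (h _ hlow))))

/-- The grid formed by the lines at distance `ε` or `2 * ε` from the lines of the pixel grid. -/
@[simps]
def offsetGrid (ε : ℝ) (hε0 : 0 < ε) (hε : ε < 1 / 4) : Grid where
  line := offsetLine ε
  strictMono := strictMono_offsetLine hε0 hε
  exists_mem_Ico := exists_mem_Ico_offsetLine ε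

/-- The closed cells of the blocks `[4 * p.1 - i, 4 * p.1 + j] × [4 * p.2 - i, 4 * p.2 + j]` of grid
lines with `p ∈ S`. In `offsetGrid ε`, such a block is the `ε`-thickening of the pixel `p` for
`i = 3` and `j = 2`, and its `2 * ε`-thickening for `i = 4` and `j = 3`. -/
def blockCells (S : Set (ℕ × ℕ)) (i j : ℤ) : Set Cell :=
  {c | ∃ p ∈ S, c.x ∈ Icc (2 * (4 * p.1 - i)) (2 * (4 * p.1 + j)) ∧
    c.y ∈ Icc (2 * (4 * p.2 - i)) (2 * (4 * p.2 + j))}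

theorem thick_fg_eq_region {Γ : Grid} {S : Set (ℕ × ℕ)} {i j : ℤ} {δ : ℝ} (hδ : 0 ≤ δ)
    (hi : ∀ n : ℤ, Γ.line (4 * n - i) = n - 1 - δ) (hj : ∀ n : ℤ, Γ.line (4 * n + j) = n + δ) :
    thick δ (fg S) = Γ.region (blockCells S i j) := by
  ext y
  simp only [mem_thick_fg hδ, Grid.region, blockCells, Grid.cellOf, mem_preimage, mem_ofPred_eq,
    mem_Icc, Grid.two_mul_le_index, Grid.index_le_two_mul, hi, hj, Int.cast_natCast]

theorem thick_fg_eq_region_offsetGrid {ε : ℝ} (hε0 : 0 < ε) (hε : ε < 1 / 4) (S : Set (ℕ × ℕ)) :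
    thick ε (fg S) = (offsetGrid ε hε0 hε).region (blockCells S 3 2) :=
  thick_fg_eq_region hε0.le
    (fun n ↦ by
      rw [offsetGrid_line, show 4 * n - 3 = 4 * (n - 1) + 1 by ring, offsetLine_four_mul_add_one]
      push_cast
      rfl)
    fun n ↦ offsetLine_four_mul_add_two ε n

theorem thick_two_mul_fg_eq_region_offsetGrid {ε : ℝ} (hε0 : 0 < ε) (hε : ε < 1 / 4)
    (S : Set (ℕ × ℕ)) :
    thick (2 * ε) (fg S) = (offsetGrid ε hε0 hε).region (blockCells S 4 3) :=
  thick_fg_eq_region (by linarith)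
    (fun n ↦ by
      rw [offsetGrid_line, show 4 * n - 4 = 4 * (n - 1) by ring, offsetLine_four_mul]
      push_cast
      rfl)
    fun n ↦ offsetLine_four_mul_add_three ε n

theorem isPureComplex_blockCells (S : Set (ℕ × ℕ)) {i j : ℤ} (hij : 0 < i + j) :
    IsPureComplex (blockCells S i j) where
  isLowerSet := by
    rintro a b hba ⟨p, hp, hx, hy⟩
    simp only [mem_Icc, le_def] at *
    exact ⟨p, hp, by simp only [mem_Icc]; omega, by simp only [mem_Icc]; omega⟩
  exists_square := by
    have square (n : ℕ) {m : ℤ} (hm : m ∈ Icc (2 * (4 * n - i)) (2 * (4 * n + j))) :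
        ∃ m' ∈ Icc (2 * (4 * n - i)) (2 * (4 * n + j)), m' % 2 = 1 ∧ IntFace m m' := by
      by_cases hlt : m < 2 * (4 * n + j)
      · exact ⟨m + 1 - m % 2, by simp only [mem_Icc] at *; omega, by omega, by omega⟩
      · exact ⟨m - 1, by simp only [mem_Icc] at *; omega, by simp only [mem_Icc] at *; omega,
          by simp only [mem_Icc] at *; omega⟩
    rintro a ⟨p, hp, hx, hy⟩
    obtain ⟨x, hx', hx2, hax⟩ := square p.1 hx
    obtain ⟨y, hy', hy2, hay⟩ := square p.2 hy
    exact ⟨⟨x, y⟩, ⟨p, hp, hx', hy'⟩, ⟨hx2, hy2⟩, hax, hay⟩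

theorem finite_blockCells {S : Set (ℕ × ℕ)} (hS : S.Finite) (i j : ℤ) :
    (blockCells S i j).Finite := by
  have block (n : ℕ) : (Icc (2 * (4 * (n : ℤ) - i)) (2 * (4 * n + j))).Finite := finite_Icc _ _
  refine (hS.biUnion fun p _ ↦ ((block p.1).prod (block p.2)).image fun z ↦ Cell.mk z.1 z.2).subset
    ?_
  rintro c ⟨p, hp, hx, hy⟩
  exact mem_biUnion hp ⟨(c.x, c.y), ⟨hx, hy⟩, rfl⟩

theorem blockCells_row_iff {S : Set (ℕ × ℕ)} {i j k : ℤ} (hi : ¬4 ∣ k + i) (hj : ¬4 ∣ k - j)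
    (m : ℤ) : ⟨m, 2 * k - 1⟩ ∈ blockCells S i j ↔ ⟨m, 2 * k + 1⟩ ∈ blockCells S i j := by
  refine exists_congr fun p ↦ and_congr_right fun _ ↦ and_congr_right fun _ ↦ ?_
  simp only [mem_Icc]
  omega

theorem blockCells_column_iff {S : Set (ℕ × ℕ)} {i j k : ℤ} (hi : ¬4 ∣ k + i) (hj : ¬4 ∣ k - j)
    (n : ℤ) : ⟨2 * k - 1, n⟩ ∈ blockCells S i j ↔ ⟨2 * k + 1, n⟩ ∈ blockCells S i j := by
  refine exists_congr fun p ↦ and_congr_right fun _ ↦ and_congr_left fun _ ↦ ?_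
  simp only [mem_Icc]
  omega

theorem transverse_blockCells (S T : Set (ℕ × ℕ)) {i j i' j' : ℤ}
    (h : ∀ k, (¬4 ∣ k + i ∧ ¬4 ∣ k - j) ∨ (¬4 ∣ k + i' ∧ ¬4 ∣ k - j')) :
    Transverse (blockCells S i j) (blockCells T i' j') where
  rows n hn := by
    obtain ⟨k, rfl⟩ := Int.dvd_of_emod_eq_zero hn
    exact (h k).imp (fun h ↦ blockCells_row_iff h.1 h.2) fun h ↦ blockCells_row_iff h.1 h.2
  columns m hm := by
    obtain ⟨k, rfl⟩ := Int.dvd_of_emod_eq_zero hm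
    exact (h k).imp (fun h ↦ blockCells_column_iff h.1 h.2) fun h ↦ blockCells_column_iff h.1 h.2

end Complexes

theorem OnGrid.finite {S : Set (ℕ × ℕ)} {h w : ℕ} (hS : OnGrid S h w) : S.Finite :=
  ((finite_Icc 1 h).prod (finite_Icc 1 w)).subset hS

theorem removing_regular_fp_component_deformation_retract_general {P : Set (ℕ × ℕ)}
    (hP : P.Finite) (G : Set (ℕ × ℕ)) {ε : ℝ} (hε0 : 0 < ε) (hε : ε < 1 / 4) {C : Set Plane}
    (hC : IsCompOf C (FPset P G ε)) (hreg : RegularComp P G ε C) :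
    SDR (thick ε (fg P)) (thick ε (fg P) \ C) := by
  simp only [RegularComp, FPset, TPset, TNset, thick_fg_eq_region_offsetGrid hε0 hε,
    thick_two_mul_fg_eq_region_offsetGrid hε0 hε] at hC hreg ⊢
  exact Grid.sdr_region_diff_component (isPureComplex_blockCells P (by norm_num))
    (isPureComplex_blockCells G (by norm_num)) (transverse_blockCells P G fun k ↦ by omega)
    (finite_blockCells hP 3 2) hC hreg.1 hreg.2

/-- If `C` is a regular connected component of `FP`, then `F_ε(P)` strongly
deformation retracts onto `F_ε(P) \ C`. -/
theorem removing_regular_fp_component_deformation_retract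
    (h w : ℕ) (P G : Set (ℕ × ℕ)) (hP : OnGrid P h w) (hG : OnGrid G h w)
    (ε : ℝ) (hε0 : 0 < ε) (hε : ε < 1 / 4)
    (C : Set Plane) (hC : IsCompOf C (FPset P G ε)) (hreg : RegularComp P G ε C) :
    SDR (thick ε (fg P)) (thick ε (fg P) \ C) := by
  exact removing_regular_fp_component_deformation_retract_general hP.finite G hε0 hε hC hreg

end
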